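/- arXiv:0712.1093 — 2 statements merged into one kernel-verified Lean document; each statement's English description precedes it below -/
import Mathlib

section
/- For every real number ν, every t > 0 and every a > 0, P[ A_t^{(ν)} ≤ a ] = a^{2ν} · e^{-2/a} · E[ (a + A_t^{(ν)})^{-2ν} · exp( 2·exp(B_t + (ν − 1/2)·t) / (a + A_t^{(ν)}) ) ]. -/
open MeasureTheory ProbabilityTheory Real Set

noncomputable section

/-- A standard one-dimensional Brownian motion `B` (with `B 0 = 0`, continuous
paths, Gaussian increments and independent increments) on a probability space
with measure `P`. -/
structure IsBrownianMotion {Ω : Type*} [MeasurableSpace Ω]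
    (P : Measure Ω) (B : ℝ → Ω → ℝ) : Prop where
  isProbabilityMeasure : IsProbabilityMeasure P
  measurable : ∀ t : ℝ, Measurable (B t)
  start : ∀ ω, B 0 ω = 0
  continuous_paths : ∀ ω, Continuous fun t => B t ω
  gaussian_increments : ∀ s t : ℝ, 0 ≤ s → s ≤ t →
    P.map (fun ω => B t ω - B s ω) = gaussianReal 0 (Real.toNNReal (t - s))
  indep_increments : ∀ t : ℕ → ℝ, Monotone t → 0 ≤ t 0 →
    iIndepFun
      (fun (i : ℕ) (ω : Ω) => B (t (i + 1)) ω - B (t i) ω) P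

/-- The exponential martingale `M_t = exp (B_t - t/2)`. -/
def M {Ω : Type*} (B : ℝ → Ω → ℝ) (t : ℝ) (ω : Ω) : ℝ :=
  Real.exp (B t ω - t / 2)

/-- The time integral `A_t = ∫_0^t exp (B_s - s/2) ds`. -/
def A {Ω : Type*} (B : ℝ → Ω → ℝ) (t : ℝ) (ω : Ω) : ℝ :=
  ∫ s in (0 : ℝ)..t, Real.exp (B s ω - s / 2)

/-- The time integral with drift `ν`: `A_t^{(ν)} = ∫_0^t exp (B_s + (ν - 1/2) s) ds`. -/
def Adrift {Ω : Type*} (B : ℝ → Ω → ℝ) (ν t : ℝ) (ω : Ω) : ℝ :=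
  ∫ s in (0 : ℝ)..t, Real.exp (B s ω + (ν - 1 / 2) * s)

variable {Ω : Type*} [MeasurableSpace Ω] (P : MeasureTheory.Measure Ω) (B : ℝ → Ω → ℝ)

/-!
Write `Z s = B s + (ν - 1 / 2) s`. The transformation `Z ↦ Z - 2 log (1 + c ∫ exp Z)` of paths,
with inverse the one for `-c`, acts on `(Z t, ∫ exp Z)` by a map of the plane, and by a
Girsanov-type formula it transports the law of `Z`, weighted by an explicit function of this
endpoint, to the law of `Z`.

On a grid of mesh `h` the transformation is replaced by an affine change of each Gaussian
increment, with slope `r = 1 / (1 + h θ / 2)` for a `θ` depending on the previous increments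
only. With this slope the log densities telescope, up to errors of third order in the increments.
Letting `h → 0` along a subsequence, Fatou's lemma shows that the transported weighted law lies
below the law of `(Z t, ∫ exp Z)`. As the transformations for `c` and `-c` are inverse to each
other with reciprocal densities, the expectation of the density over `1 + c ∫ exp Z > 0` equals
`P (1 - c ∫ exp Z > 0)`. For `c = 1 / a` this is `P (∫ exp Z < a)`, and `∫ exp Z` has no atom at `a`
since one atom would be transported to uncountably many.
-/

open Filter Topology
open scoped ENNReal NNReal

/-! ### Comparing finite measures -/

theorem measure_le_of_forall_lintegral_boundedContinuous_le {X : Type*} [TopologicalSpace X]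
    [TopologicalSpace.PseudoMetrizableSpace X] [MeasurableSpace X] [BorelSpace X]
    {μ₁ μ₂ : Measure X} [IsFiniteMeasure μ₂]
    (h : ∀ f : BoundedContinuousFunction X ℝ≥0, ∫⁻ x, f x ∂μ₁ ≤ ∫⁻ x, f x ∂μ₂) : μ₁ ≤ μ₂ := by
  have closed_le {F : Set X} (hF : IsClosed F) : μ₁ F ≤ μ₂ F :=
    ge_of_tendsto' (HasOuterApproxClosed.tendsto_lintegral_apprSeq hF μ₂) fun n =>
      (HasOuterApproxClosed.measure_le_lintegral hF μ₁ n).trans (h _)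
  have : IsFiniteMeasure μ₁ :=
    ⟨(closed_le isClosed_univ).trans_lt (measure_lt_top μ₂ univ)⟩
  refine Measure.le_iff.2 fun s hs => ?_
  rw [hs.measure_eq_iSup_isClosed_of_ne_top (measure_ne_top μ₁ s)]
  exact iSup₂_le fun F hFs => iSup_le fun hF => (closed_le hF).trans (measure_mono hFs)

/-! ### Affine changes of variables in Gaussian integrals -/

/-- The Radon–Nikodym factor of the affine substitution `x ↦ r * x - s` under the centred Gaussian
law of variance `v`: the ratio of the Gaussian densities at `r * x - s` and at `x`, times the
Jacobian `|r|`. -/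
def affineWeight (v r s x : ℝ) : ℝ := |r| * exp ((x ^ 2 - (r * x - s) ^ 2) / (2 * v))

lemma affineWeight_nonneg (v r s x : ℝ) : 0 ≤ affineWeight v r s x := by
  unfold affineWeight; positivity

lemma measurable_affineWeight {α : Type*} [MeasurableSpace α] {r s x : α → ℝ} (v : ℝ)
    (hr : Measurable r) (hs : Measurable s) (hx : Measurable x) :
    Measurable fun a => affineWeight v (r a) (s a) (x a) := by
  unfold affineWeight; fun_prop

lemma lintegral_comp_affine {r : ℝ} (hr : r ≠ 0) (s : ℝ) (ψ : ℝ → ℝ≥0∞) :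
    ∫⁻ x, ENNReal.ofReal |r| * ψ (r * x - s) = ∫⁻ x, ψ x := by
  have h_image : (fun x => r * x - s) '' univ = univ :=
    image_univ_of_surjective fun y => ⟨(y + s) / r, by field_simp; ring⟩
  have h_deriv (x : ℝ) : HasDerivWithinAt (fun x => r * x - s) r univ x := by
    simpa using ((hasDerivWithinAt_id x univ).const_mul r).sub_const s
  have h_inj : InjOn (fun x => r * x - s) univ := fun x _ y _ hxy =>
    mul_left_cancel₀ hr (sub_left_injective hxy)
  simpa [h_image] using (lintegral_image_eq_lintegral_abs_deriv_mul MeasurableSet.univ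
    (fun x _ => h_deriv x) h_inj ψ).symm

lemma gaussianPDF_mul_affineWeight {v : ℝ≥0} (hv : v ≠ 0) (r s x : ℝ) :
    gaussianPDF 0 v x * ENNReal.ofReal (affineWeight v r s x)
      = ENNReal.ofReal |r| * gaussianPDF 0 v (r * x - s) := by
  have hv' : (v : ℝ) ≠ 0 := by exact_mod_cast hv
  simp only [gaussianPDF, gaussianPDFReal, affineWeight]
  rw [← ENNReal.ofReal_mul (by positivity), ← ENNReal.ofReal_mul (by positivity),
    mul_mul_mul_comm, ← exp_add, mul_left_comm |r|, mul_assoc, mul_assoc]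
  congr 4
  field_simp
  ring

-- An equality unless `r = 0`, where the left-hand side vanishes.
theorem lintegral_affineWeight_le {v : ℝ≥0} (hv : v ≠ 0) (r s : ℝ) {φ : ℝ → ℝ≥0∞}
    (hφ : Measurable φ) :
    ∫⁻ x, φ (r * x - s) * ENNReal.ofReal (affineWeight v r s x) ∂gaussianReal 0 v
      ≤ ∫⁻ x, φ x ∂gaussianReal 0 v := by
  rcases eq_or_ne r 0 with rfl | hr
  · simp [affineWeight]
  have h_meas : Measurable fun x => ENNReal.ofReal (affineWeight v r s x) :=
    (measurable_affineWeight v measurable_const measurable_const measurable_id).ennreal_ofReal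
  rw [gaussianReal_of_var_ne_zero _ hv,
    lintegral_withDensity_eq_lintegral_mul _ (measurable_gaussianPDF _ _) (by fun_prop),
    lintegral_withDensity_eq_lintegral_mul _ (measurable_gaussianPDF _ _) hφ,
    ← lintegral_comp_affine hr s (gaussianPDF 0 v * φ)]
  refine (lintegral_congr fun x => ?_).le
  simp only [Pi.mul_apply]
  rw [mul_left_comm, gaussianPDF_mul_affineWeight hv]
  ring

/-! ### Predictable affine transformations of Gaussian sequences -/

lemma preimage_update_pi {ι : Type*} [DecidableEq ι] {X : ι → Type*} (i : ι) (s : Finset ι)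
    (t : ∀ j, Set (X j)) :
    (fun p : (∀ j, X j) × X i => Function.update p.1 i p.2) ⁻¹' Set.pi s t
      = Set.pi ↑(s.erase i) t ×ˢ {u | i ∈ s → u ∈ t i} := by
  ext ⟨x, u⟩
  simp only [mem_preimage, Set.mem_pi, mem_prod, mem_ofPred_eq, Finset.mem_coe, Finset.mem_erase]
  refine ⟨fun h => ⟨fun j hj => ?_, fun hi => ?_⟩, fun ⟨hx, hu⟩ j hj => ?_⟩
  · simpa [hj.1] using h j hj.2
  · simpa using h i hi
  · rcases eq_or_ne j i with rfl | hji
    · simpa using hu hj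
    · simpa [hji] using hx j ⟨hji, hj⟩

theorem measurePreserving_update_infinitePi {ι : Type*} [DecidableEq ι] {X : ι → Type*}
    [∀ j, MeasurableSpace (X j)] (μ : ∀ j, Measure (X j)) [∀ j, IsProbabilityMeasure (μ j)]
    (i : ι) :
    MeasurePreserving (fun p : (∀ j, X j) × X i => Function.update p.1 i p.2)
      ((Measure.infinitePi μ).prod (μ i)) (Measure.infinitePi μ) := by
  have h_meas : Measurable fun p : (∀ j, X j) × X i => Function.update p.1 i p.2 :=
    measurable_update'
  refine ⟨h_meas, Measure.eq_infinitePi μ fun s t ht => ?_⟩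
  have h_box : MeasurableSet (Set.pi (s : Set ι) t) :=
    MeasurableSet.pi s.countable_toSet fun j _ => ht j
  rw [Measure.map_apply h_meas h_box, preimage_update_pi, Measure.prod_prod,
    Measure.infinitePi_pi μ fun j _ => ht j]
  by_cases hi : i ∈ s
  · simp [hi, Finset.prod_erase_mul]
  · simp [hi]

theorem lintegral_infinitePi_eq_lintegral_update {ι : Type*} [DecidableEq ι] {X : ι → Type*}
    [∀ j, MeasurableSpace (X j)] (μ : ∀ j, Measure (X j)) [∀ j, IsProbabilityMeasure (μ j)]
    (i : ι) {F : (∀ j, X j) → ℝ≥0∞} (hF : Measurable F) :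
    ∫⁻ x, F x ∂Measure.infinitePi μ
      = ∫⁻ x, ∫⁻ u, F (Function.update x i u) ∂μ i ∂Measure.infinitePi μ := by
  have h := measurePreserving_update_infinitePi μ i
  rw [← h.lintegral_comp hF]
  exact lintegral_prod _ (hF.comp h.measurable).aemeasurable

/-- A sequence of functionals of a real sequence, the `k`-th of which is a measurable function of
the first `k` terms. -/
def IsPredictableSeq (r : ℕ → (ℕ → ℝ) → ℝ) : Prop :=
  ∀ k, Measurable (r k) ∧ DependsOn (r k) (Iio k)

/-- The transformation of sequences which acts on the `k`-th term by the affine map with slope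
`r k x` and offset `s k x`. -/
def affineTwist (r s : ℕ → (ℕ → ℝ) → ℝ) (x : ℕ → ℝ) (k : ℕ) : ℝ := r k x * x k - s k x

/-- The product of the Radon–Nikodym factors of the first `n` steps of `affineTwist r s`. -/
def twistWeight (v : ℝ) (r s : ℕ → (ℕ → ℝ) → ℝ) (n : ℕ) (x : ℕ → ℝ) : ℝ :=
  ∏ k ∈ Finset.range n, affineWeight v (r k x) (s k x) (x k)

section Twist

variable {r s : ℕ → (ℕ → ℝ) → ℝ}

lemma IsPredictableSeq.apply_update (hr : IsPredictableSeq r) {k n : ℕ} (hkn : k ≤ n)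
    (x : ℕ → ℝ) (u : ℝ) : r k (Function.update x n u) = r k x :=
  (hr k).2 fun _ hi => Function.update_of_ne (lt_of_lt_of_le hi hkn).ne u x

lemma measurable_affineTwist (hr : IsPredictableSeq r) (hs : IsPredictableSeq s) :
    Measurable (affineTwist r s) :=
  measurable_pi_lambda _ fun k =>
    ((hr k).1.mul (measurable_pi_apply k)).sub (hs k).1

lemma measurable_twistWeight (v : ℝ) (hr : IsPredictableSeq r) (hs : IsPredictableSeq s) (n : ℕ) :
    Measurable (twistWeight v r s n) :=
  Finset.measurable_prod _ fun k _ =>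
    measurable_affineWeight v (hr k).1 (hs k).1 (measurable_pi_apply k)

lemma affineTwist_update_eqOn (hr : IsPredictableSeq r) (hs : IsPredictableSeq s) (n : ℕ)
    (x : ℕ → ℝ) (u : ℝ) :
    ∀ k ∈ Iio (n + 1), affineTwist r s (Function.update x n u) k
      = Function.update (affineTwist r s x) n (r n x * u - s n x) k := by
  intro k hk
  have hkn : k ≤ n := Nat.lt_succ_iff.1 hk
  simp only [affineTwist, hr.apply_update hkn, hs.apply_update hkn]
  rcases eq_or_ne k n with rfl | h
  · simp
  · simp [h, affineTwist]

lemma twistWeight_succ_update (v : ℝ) (hr : IsPredictableSeq r) (hs : IsPredictableSeq s)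
    (n : ℕ) (x : ℕ → ℝ) (u : ℝ) :
    twistWeight v r s (n + 1) (Function.update x n u)
      = twistWeight v r s n x * affineWeight v (r n x) (s n x) u := by
  rw [twistWeight, Finset.prod_range_succ, hr.apply_update le_rfl, hs.apply_update le_rfl,
    Function.update_self]
  congr 1
  refine Finset.prod_congr rfl fun k hk => ?_
  have hkn := Finset.mem_range.1 hk
  rw [hr.apply_update hkn.le, hs.apply_update hkn.le, Function.update_of_ne hkn.ne]

lemma lintegral_twistWeight_succ_update_le {v : ℝ≥0} (hv : v ≠ 0) (hr : IsPredictableSeq r)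
    (hs : IsPredictableSeq s) (n : ℕ) {g : (ℕ → ℝ) → ℝ≥0∞} (hg : Measurable g)
    (hgn : DependsOn g (Iio (n + 1))) (x : ℕ → ℝ) :
    ∫⁻ u, g (affineTwist r s (Function.update x n u)) *
        ENNReal.ofReal (twistWeight v r s (n + 1) (Function.update x n u)) ∂gaussianReal 0 v
      ≤ (∫⁻ u, g (Function.update (affineTwist r s x) n u) ∂gaussianReal 0 v) *
          ENNReal.ofReal (twistWeight v r s n x) := by
  have h_nonneg : 0 ≤ twistWeight v r s n x :=
    Finset.prod_nonneg fun k _ => affineWeight_nonneg _ _ _ _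
  have h_weight : Measurable (affineWeight v (r n x) (s n x)) :=
    measurable_affineWeight v measurable_const measurable_const measurable_id
  have h_update : Measurable (Function.update (affineTwist r s x) n) :=
    measurable_update (affineTwist r s x)
  simp only [hgn (affineTwist_update_eqOn hr hs n x _), twistWeight_succ_update v hr hs,
    ENNReal.ofReal_mul h_nonneg, mul_left_comm _ (ENNReal.ofReal (twistWeight v r s n x))]
  rw [lintegral_const_mul _ (by fun_prop), mul_comm]
  exact mul_le_mul_left (lintegral_affineWeight_le hv (r n x) (s n x) (hg.comp h_update)) _

theorem lintegral_twistWeight_le {v : ℝ≥0} (hv : v ≠ 0) (hr : IsPredictableSeq r)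
    (hs : IsPredictableSeq s) (n : ℕ) {g : (ℕ → ℝ) → ℝ≥0∞} (hg : Measurable g)
    (hgn : DependsOn g (Iio n)) :
    ∫⁻ x, g (affineTwist r s x) * ENNReal.ofReal (twistWeight v r s n x)
        ∂Measure.infinitePi (fun _ => gaussianReal 0 v)
      ≤ ∫⁻ x, g x ∂Measure.infinitePi (fun _ => gaussianReal 0 v) := by
  set Q : Measure (ℕ → ℝ) := Measure.infinitePi (fun _ => gaussianReal 0 v)
  induction n generalizing g with
  | zero =>
    refine (lintegral_congr fun x => ?_).le
    simp [twistWeight, hgn (x := affineTwist r s x) (y := x) (by simp)]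
  | succ n ih =>
    have resample {F : (ℕ → ℝ) → ℝ≥0∞} (hF : Measurable F) :
        ∫⁻ x, F x ∂Q = ∫⁻ x, ∫⁻ u, F (Function.update x n u) ∂gaussianReal 0 v ∂Q :=
      lintegral_infinitePi_eq_lintegral_update (fun _ : ℕ => gaussianReal 0 v) n hF
    have h_twist := measurable_affineTwist hr hs
    have h_weight := measurable_twistWeight v hr hs (n + 1)
    set G : (ℕ → ℝ) → ℝ≥0∞ := fun y => ∫⁻ u, g (Function.update y n u) ∂gaussianReal 0 v
    have hG : Measurable G := (hg.comp measurable_update').lintegral_prod_right'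
    have hGn : DependsOn G (Iio n) := fun x y hxy => lintegral_congr fun u => hgn fun i hi => by
      rcases eq_or_ne i n with rfl | h
      · simp
      · simpa [h] using hxy i (lt_of_le_of_ne (Nat.lt_succ_iff.1 hi) h)
    calc _ = ∫⁻ x, ∫⁻ u, g (affineTwist r s (Function.update x n u)) * ENNReal.ofReal
              (twistWeight v r s (n + 1) (Function.update x n u)) ∂gaussianReal 0 v ∂Q :=
          resample (by fun_prop)
      _ ≤ ∫⁻ x, G (affineTwist r s x) * ENNReal.ofReal (twistWeight v r s n x) ∂Q :=
          lintegral_mono (lintegral_twistWeight_succ_update_le hv hr hs n hg hgn)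
      _ ≤ ∫⁻ x, G x ∂Q := ih hG hGn
      _ = ∫⁻ x, g x ∂Q := (resample hg).symm

end Twist

/-! ### Taylor estimates for a single step -/

/-- The size of the errors committed in one step `x` of a walk with step variance `h`: sums of
these errors over a Brownian grid are negligible. -/
def stepError (h x : ℝ) : ℝ := |x| ^ 3 + h * √h

lemma stepError_nonneg {h : ℝ} (hh : 0 ≤ h) (x : ℝ) : 0 ≤ stepError h x := by
  unfold stepError; positivity

lemma abs_pow_three_le_stepError {h : ℝ} (hh : 0 ≤ h) (x : ℝ) : |x| ^ 3 ≤ stepError h x :=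
  le_add_of_nonneg_right (by positivity)

lemma sq_le_stepError {h : ℝ} (hh : 0 ≤ h) (hh1 : h ≤ 1) (x : ℝ) : h ^ 2 ≤ stepError h x := by
  have h_sqrt : h ≤ √h := le_sqrt_of_sq_le (by nlinarith)
  have := mul_le_mul_of_nonneg_left h_sqrt hh
  have : 0 ≤ |x| ^ 3 := by positivity
  unfold stepError
  linarith

lemma mul_abs_le_stepError {h : ℝ} (hh : 0 ≤ h) (x : ℝ) : h * |x| ≤ stepError h x := by
  unfold stepError
  rcases le_total |x| √h with hx | hx
  · have : h * |x| ≤ h * √h := by gcongr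
    have : 0 ≤ |x| ^ 3 := by positivity
    linarith
  · have : h ≤ |x| ^ 2 := (sq_sqrt hh).symm.trans_le (by gcongr)
    have : h * |x| ≤ |x| ^ 2 * |x| := by gcongr
    have : 0 ≤ h * √h := by positivity
    linarith [pow_succ |x| 2]

lemma abs_exp_sub_taylor_two_le {u : ℝ} (hu : |u| ≤ 1) :
    |exp u - (1 + u + u ^ 2 / 2)| ≤ |u| ^ 3 := by
  have h := Real.exp_bound hu (n := 3) (by norm_num)
  norm_num [Finset.sum_range_succ, Nat.factorial] at h
  linarith [pow_nonneg (abs_nonneg u) 3]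

lemma abs_log_one_add_sub_le {w : ℝ} (hw : -(1 / 2) ≤ w) : |log (1 + w) - w| ≤ 2 * w ^ 2 := by
  have h_pos : 0 < 1 + w := by linarith
  have h_upper := log_le_sub_one_of_pos h_pos
  have h_lower := one_sub_inv_le_log_of_pos h_pos
  have h_inv : (1 + w)⁻¹ ≤ 1 - w + 2 * w ^ 2 := by
    rw [inv_le_iff_one_le_mul₀ h_pos]
    nlinarith [mul_nonneg (sq_nonneg w) (show 0 ≤ 1 + 2 * w by linarith)]
  exact abs_le.2 ⟨by linarith, by nlinarith [sq_nonneg w]⟩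

lemma abs_mul_inv_sq_sub_log_le {w : ℝ} (hw : |w| ≤ 1 / 4) :
    |w * (1 + w)⁻¹ ^ 2 - log (1 + w)| ≤ 11 * w ^ 2 := by
  obtain ⟨hw₁, hw₂⟩ := abs_le.1 hw
  have h_inv_sq : (1 + w)⁻¹ ^ 2 ≤ 2 ^ 2 :=
    pow_le_pow_left₀ (inv_nonneg.2 (by linarith))
      (by simpa using inv_anti₀ (by norm_num) (by linarith : 1 / 2 ≤ 1 + w)) 2
  have h_eq : w * (1 + w)⁻¹ ^ 2 - log (1 + w)
      = -(log (1 + w) - w) - w ^ 2 * (1 + w)⁻¹ ^ 2 * (2 + w) := by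
    have : 1 + w ≠ 0 := by linarith
    field_simp
    ring
  have h_quad : |w ^ 2 * (1 + w)⁻¹ ^ 2 * (2 + w)| ≤ 9 * w ^ 2 := by
    rw [abs_of_nonneg (mul_nonneg (by positivity) (by linarith))]
    calc w ^ 2 * (1 + w)⁻¹ ^ 2 * (2 + w) ≤ w ^ 2 * 2 ^ 2 * (9 / 4) := by
          gcongr <;> linarith
      _ = _ := by ring
  have h_log := abs_log_one_add_sub_le (w := w) (by linarith)
  rw [h_eq]
  exact (abs_sub _ _).trans (by rw [abs_neg]; linarith)

section Step

variable {μ K h θ x : ℝ}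

lemma abs_exp_drift_sub_le (hK : 1 ≤ K) (hh : 0 < h) (hKh : K * h ≤ 1 / 2) (hμ : |μ| ≤ K)
    (hx : |x| ≤ 1 / 2) :
    |exp (x + μ * h) - (1 + x + μ * h + x ^ 2 / 2)| ≤ 8 * K ^ 2 * stepError h x := by
  have h_drift : |μ * h| ≤ K * h := by rw [abs_mul, abs_of_pos hh]; gcongr
  have h_taylor : |exp (x + μ * h) - (1 + (x + μ * h) + (x + μ * h) ^ 2 / 2)|
      ≤ 4 * |x| ^ 3 + 2 * (K * h) ^ 2 :=
    calc _ ≤ |x + μ * h| ^ 3 :=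
          abs_exp_sub_taylor_two_le ((abs_add_le _ _).trans (by linarith))
      _ ≤ (|x| + K * h) ^ 3 := by
          gcongr
          exact (abs_add_le _ _).trans (by linarith)
      _ ≤ 4 * (|x| ^ 3 + (K * h) ^ 3) :=
          (add_pow_le (abs_nonneg x) (by positivity) 3).trans_eq (by norm_num)
      _ ≤ 4 * |x| ^ 3 + 2 * (K * h) ^ 2 := by nlinarith [sq_nonneg (K * h)]
  have h_cross : |x * (μ * h) + (μ * h) ^ 2 / 2| ≤ K * (h * |x|) + (K * h) ^ 2 / 2 :=
    calc _ ≤ |x| * |μ * h| + |μ * h| ^ 2 / 2 := by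
          refine (abs_add_le _ _).trans_eq ?_
          rw [abs_mul, abs_div, abs_pow, abs_two]
      _ ≤ |x| * (K * h) + (K * h) ^ 2 / 2 := by gcongr
      _ = _ := by ring
  have h_sq := sq_le_stepError hh.le (by nlinarith : h ≤ 1) x
  have h_mul := mul_abs_le_stepError hh.le x
  have h_cube := abs_pow_three_le_stepError hh.le x
  calc _ = |(exp (x + μ * h) - (1 + (x + μ * h) + (x + μ * h) ^ 2 / 2))
          + (x * (μ * h) + (μ * h) ^ 2 / 2)| := by congr 1; ring
    _ ≤ (4 * |x| ^ 3 + 2 * (K * h) ^ 2) + (K * (h * |x|) + (K * h) ^ 2 / 2) :=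
        (abs_add_le _ _).trans (add_le_add h_taylor h_cross)
    _ = 4 * |x| ^ 3 + K * (h * |x|) + 5 / 2 * K ^ 2 * h ^ 2 := by ring
    _ ≤ 4 * stepError h x + K * stepError h x + 5 / 2 * K ^ 2 * stepError h x := by gcongr
    _ = (4 + K + 5 / 2 * K ^ 2) * stepError h x := by ring
    _ ≤ 8 * K ^ 2 * stepError h x :=
        mul_le_mul_of_nonneg_right (by nlinarith) (stepError_nonneg hh.le x)

lemma abs_mul_div_two_le (hh : 0 < h) (hKh : K * h ≤ 1 / 2) (hθ : |θ| ≤ K) :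
    |h * θ / 2| ≤ K * h / 2 ∧ |h * θ / 2| ≤ 1 / 4 ∧ (1 + h * θ / 2)⁻¹ ∈ Icc 0 2 := by
  have h_abs : |h * θ / 2| ≤ K * h / 2 := by
    rw [abs_div, abs_mul, abs_of_pos hh, abs_two, mul_comm K]
    gcongr
  have h_quarter : |h * θ / 2| ≤ 1 / 4 := by linarith
  have h_pos : 1 / 2 ≤ 1 + h * θ / 2 := by linarith [(abs_le.1 h_quarter).1]
  exact ⟨h_abs, h_quarter, by positivity, by simpa using inv_anti₀ (by norm_num) h_pos⟩

lemma abs_affine_increment_sub_le (hK : 1 ≤ K) (hh : 0 < h) (hKh : K * h ≤ 1 / 2)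
    (hθ : |θ| ≤ K) {r : ℝ} (hr : r = (1 + h * θ / 2)⁻¹) :
    |r * x - r * (h * θ) - (x - 2 * log (1 + h * θ / 2))| ≤ 3 * K ^ 2 * stepError h x := by
  obtain ⟨hw, hw_quarter, hr₀, hr₂⟩ := abs_mul_div_two_le hh hKh hθ
  rw [← hr] at hr₀ hr₂
  set w := h * θ / 2 with hw_def
  have h_inv : r * (1 + w) = 1 :=
    hr ▸ inv_mul_cancel₀ (by linarith [(abs_le.1 hw_quarter).1])
  have h_log := abs_log_one_add_sub_le (w := w) (by linarith [(abs_le.1 hw_quarter).1])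
  have hw_sq : w ^ 2 ≤ (K * h / 2) ^ 2 := sq_le_sq.2 (hw.trans (le_abs_self _))
  have h_sq := sq_le_stepError hh.le (by nlinarith : h ≤ 1) x
  have h_mul := mul_abs_le_stepError hh.le x
  have h_linear : |r * w * x| ≤ K * (h * |x|) := by
    rw [abs_mul, abs_mul, abs_of_nonneg hr₀]
    calc r * |w| * |x| ≤ 2 * (K * h / 2) * |x| := by gcongr
      _ = _ := by ring
  have h_quad : |r * w ^ 2| ≤ 2 * w ^ 2 := by
    rw [abs_of_nonneg (by positivity)]
    gcongr
  calc _ = |-(r * w * x) + 2 * (log (1 + w) - w) + 2 * (r * w ^ 2)| := by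
        congr 1
        linear_combination (x - 2 * w) * h_inv + 2 * r * hw_def
    _ ≤ |r * w * x| + 2 * |log (1 + w) - w| + 2 * |r * w ^ 2| := by
        refine (abs_add_three _ _ _).trans_eq ?_
        rw [abs_neg, abs_mul 2, abs_mul 2, abs_two]
    _ ≤ K * (h * |x|) + 2 * K ^ 2 * h ^ 2 := by linarith [mul_pow K h 2]
    _ ≤ K * stepError h x + 2 * K ^ 2 * stepError h x := by gcongr
    _ = (K + 2 * K ^ 2) * stepError h x := by ring
    _ ≤ 3 * K ^ 2 * stepError h x :=
        mul_le_mul_of_nonneg_right (by nlinarith) (stepError_nonneg hh.le x)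

lemma log_affineWeight_contraction {r : ℝ} (h_pos : 0 < 1 + h * θ / 2)
    (hr : r = (1 + h * θ / 2)⁻¹) :
    log (affineWeight h r (r * (h * θ)) x)
      = -log (1 + h * θ / 2) + (x ^ 2 - (r * x - r * (h * θ)) ^ 2) / (2 * h) := by
  have hr_pos : 0 < r := hr ▸ inv_pos.2 h_pos
  rw [affineWeight, abs_of_pos hr_pos, log_mul hr_pos.ne' (exp_ne_zero _), log_exp]
  rw [hr, log_inv]

-- The identity behind the cancellation: `R` is the Taylor remainder of `exp (x + μ * h)`.
lemma tilt_increment_sub_log_weight {r R l : ℝ} (hh : h ≠ 0) (h_pos : 0 < 1 + h * θ / 2)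
    (hr : r = (1 + h * θ / 2)⁻¹) :
    θ * ((1 + x + μ * h + x ^ 2 / 2 + R) * r - 1) - 2 * (μ + 1 / 2) * l
        - (-l + (x ^ 2 - (r * x - r * (h * θ)) ^ 2) / (2 * h))
      = θ * (r * R) + θ * r ^ 2 * (h * θ / 2) * (x + x ^ 2 / 4 + μ * h - h * θ / 2)
        + 2 * μ * (h * θ / 2 * r ^ 2 - l) := by
  have hr_ne : r ≠ 0 := hr ▸ (inv_pos.2 h_pos).ne'
  have h_inv : r * (1 + h * θ / 2) = 1 := hr ▸ inv_mul_cancel₀ h_pos.ne'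
  have hθ : θ = 2 * (1 - r) / (r * h) := by
    field_simp
    linear_combination 2 * h_inv
  rw [hθ]
  field_simp
  ring

lemma abs_tilt_cross_term_le (hK : 1 ≤ K) (hh : 0 < h) (hKh : K * h ≤ 1 / 2) (hμ : |μ| ≤ K)
    (hθ : |θ| ≤ K) (hx : |x| ≤ 1 / 2) {r : ℝ} (hr : r = (1 + h * θ / 2)⁻¹) :
    |θ * r ^ 2 * (h * θ / 2) * (x + x ^ 2 / 4 + μ * h - h * θ / 2)|
      ≤ 8 * K ^ 3 * stepError h x := by
  obtain ⟨hw, -, hr₀, hr₂⟩ := abs_mul_div_two_le hh hKh hθ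
  rw [← hr] at hr₀ hr₂
  have hr_abs : |r| ≤ 2 := (abs_of_nonneg hr₀).trans_le hr₂
  have h_sq := sq_le_stepError hh.le (by nlinarith : h ≤ 1) x
  have h_mul := mul_abs_le_stepError hh.le x
  have h_drift : |μ * h| ≤ K * h := by rw [abs_mul, abs_of_pos hh]; gcongr
  have h_sum : |x + x ^ 2 / 4 + μ * h - h * θ / 2| ≤ 2 * |x| + 2 * (K * h) :=
    calc _ ≤ |x| + |x| ^ 2 / 4 + |μ * h| + |h * θ / 2| := by
          refine (abs_sub _ _).trans (add_le_add_left ((abs_add_three _ _ _).trans_eq ?_) _)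
          rw [abs_div, abs_pow, abs_of_pos (by norm_num : (0 : ℝ) < 4)]
      _ ≤ _ := by nlinarith [abs_nonneg x]
  have hK_cube : K ^ 2 ≤ K ^ 3 := pow_le_pow_right₀ hK (by norm_num)
  rw [abs_mul, abs_mul, abs_mul, abs_pow]
  calc _ ≤ K * 2 ^ 2 * (K * h / 2) * (2 * |x| + 2 * (K * h)) := by gcongr
    _ = 4 * (K ^ 2 * (h * |x|) + K ^ 3 * h ^ 2) := by ring
    _ ≤ 4 * (K ^ 3 * stepError h x + K ^ 3 * stepError h x) := by gcongr
    _ = _ := by ring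

lemma abs_tilt_log_term_le (hK : 1 ≤ K) (hh : 0 < h) (hKh : K * h ≤ 1 / 2) (hμ : |μ| ≤ K)
    (hθ : |θ| ≤ K) (x : ℝ) :
    |2 * μ * (h * θ / 2 * (1 + h * θ / 2)⁻¹ ^ 2 - log (1 + h * θ / 2))|
      ≤ 6 * K ^ 3 * stepError h x := by
  obtain ⟨hw, hw_quarter, -⟩ := abs_mul_div_two_le hh hKh hθ
  have h_sq := sq_le_stepError hh.le (by nlinarith : h ≤ 1) x
  have hw_sq : (h * θ / 2) ^ 2 ≤ (K * h / 2) ^ 2 := sq_le_sq.2 (hw.trans (le_abs_self _))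
  have h_abs : |h * θ / 2 * (1 + h * θ / 2)⁻¹ ^ 2 - log (1 + h * θ / 2)|
      ≤ 3 * (K ^ 2 * h ^ 2) := by
    linarith [sq_nonneg (K * h), abs_mul_inv_sq_sub_log_le hw_quarter]
  rw [abs_mul, abs_mul, abs_two]
  calc _ ≤ 2 * K * (3 * (K ^ 2 * stepError h x)) := by
        gcongr
        exact h_abs.trans (by gcongr)
    _ = _ := by ring

lemma abs_tilt_increment_sub_log_affineWeight_le (hK : 1 ≤ K) (hh : 0 < h)
    (hKh : K * h ≤ 1 / 2) (hμ : |μ| ≤ K) (hθ : |θ| ≤ K) (hx : |x| ≤ 1 / 2) {r : ℝ}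
    (hr : r = (1 + h * θ / 2)⁻¹) :
    |θ * (exp (x + μ * h) * r - 1) - 2 * (μ + 1 / 2) * log (1 + h * θ / 2)
        - log (affineWeight h r (r * (h * θ)) x)| ≤ 30 * K ^ 3 * stepError h x := by
  obtain ⟨-, hw_quarter, hr₀, hr₂⟩ := abs_mul_div_two_le hh hKh hθ
  have h_pos : 0 < 1 + h * θ / 2 := by linarith [(abs_le.1 hw_quarter).1]
  rw [← hr] at hr₀ hr₂
  have hr_abs : |r| ≤ 2 := (abs_of_nonneg hr₀).trans_le hr₂
  set R := exp (x + μ * h) - (1 + x + μ * h + x ^ 2 / 2) with hR_def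
  have h_exp : exp (x + μ * h) = 1 + x + μ * h + x ^ 2 / 2 + R := by rw [hR_def]; ring
  have h_exp_term : |θ * (r * R)| ≤ K * (2 * (8 * K ^ 2 * stepError h x)) := by
    rw [abs_mul, abs_mul]
    gcongr
    exact abs_exp_drift_sub_le hK hh hKh hμ hx
  have h_cross_term := abs_tilt_cross_term_le hK hh hKh hμ hθ hx hr
  have h_log_term := abs_tilt_log_term_le hK hh hKh hμ hθ x
  rw [← hr] at h_log_term
  rw [log_affineWeight_contraction h_pos hr, h_exp, tilt_increment_sub_log_weight hh.ne' h_pos hr]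
  refine (abs_add_three _ _ _).trans
    ((add_le_add_three h_exp_term h_cross_term h_log_term).trans_eq ?_)
  ring

end Step

/-! ### Discretised exponential functionals -/

/-- The walk with increments `x j + μ h`, which discretises a path with drift `μ` on the grid of
mesh `h`. -/
def driftWalk (μ h : ℝ) (k : ℕ) (x : ℕ → ℝ) : ℝ := ∑ j ∈ Finset.range k, (x j + μ * h)

/-- The left Riemann sum, of mesh `h`, of the exponential of `driftWalk`. -/
def expArea (μ h : ℝ) (k : ℕ) (x : ℕ → ℝ) : ℝ :=
  ∑ j ∈ Finset.range k, h * exp (driftWalk μ h j x)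

/-- The discretisation of `1 + c ∫ exp Z`, for `Z` the path with drift. -/
def areaFactor (c μ h : ℝ) (k : ℕ) (x : ℕ → ℝ) : ℝ := 1 + c * expArea μ h k x

/-- The discretisation of `2 c exp Z / (1 + c ∫ exp Z)`, the drift which the transformation of paths
`Z ↦ Z - 2 log (1 + c ∫ exp Z)` removes. -/
def tilt (c μ h : ℝ) (k : ℕ) (x : ℕ → ℝ) : ℝ :=
  2 * c * exp (driftWalk μ h k x) / areaFactor c μ h k x

/-- The discretisation of `∫ exp Z / (1 + c ∫ exp Z)`, the area of the transformed path. -/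
def reducedArea (c μ h : ℝ) (k : ℕ) (x : ℕ → ℝ) : ℝ := expArea μ h k x / areaFactor c μ h k x

/-- The slope of the affine map applied to the `k`-th increment. Removing the drift `tilt` by a
translation alone would leave second order terms in the increments in the density; this slope
cancels them. -/
def contraction (c μ h : ℝ) (k : ℕ) (x : ℕ → ℝ) : ℝ := (1 + h * tilt c μ h k x / 2)⁻¹

/-- The offset of the affine map applied to the `k`-th increment. -/
def shift (c μ h : ℝ) (k : ℕ) (x : ℕ → ℝ) : ℝ := contraction c μ h k x * (h * tilt c μ h k x)

section Discrete

variable {c μ h : ℝ}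

lemma isPredictableSeq_sum {f : ℕ → (ℕ → ℝ) → ℝ} (hf : ∀ j, Measurable (f j))
    (hfd : ∀ j, DependsOn (f j) (Iic j)) :
    IsPredictableSeq fun k x => ∑ j ∈ Finset.range k, f j x := fun _ =>
  ⟨Finset.measurable_fun_sum _ fun j _ => hf j, fun _ _ hxy => Finset.sum_congr rfl fun j hj =>
    hfd j fun _ hi => hxy _ (lt_of_le_of_lt hi (Finset.mem_range.1 hj))⟩

lemma isPredictableSeq_driftWalk : IsPredictableSeq (driftWalk μ h) :=
  isPredictableSeq_sum (fun j => (measurable_pi_apply j).add_const _) fun j _ _ hxy => by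
    simp only [hxy j self_mem_Iic]

lemma isPredictableSeq_expArea : IsPredictableSeq (expArea μ h) :=
  isPredictableSeq_sum (fun j => (isPredictableSeq_driftWalk j).1.exp.const_mul _)
    fun j _ _ hxy => by
      simp only [(isPredictableSeq_driftWalk j).2 fun i hi => hxy i (Iio_subset_Iic_self hi)]

lemma isPredictableSeq_tilt : IsPredictableSeq (tilt c μ h) := fun k => by
  have hZ := isPredictableSeq_driftWalk (μ := μ) (h := h) k
  have hA := isPredictableSeq_expArea (μ := μ) (h := h) k
  refine ⟨(hZ.1.exp.const_mul _).div ((hA.1.const_mul c).const_add 1), fun x y hxy => ?_⟩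
  simp only [tilt, areaFactor, hZ.2 hxy, hA.2 hxy]

lemma isPredictableSeq_contraction : IsPredictableSeq (contraction c μ h) := fun k => by
  have hθ := isPredictableSeq_tilt (c := c) (μ := μ) (h := h) k
  refine ⟨(((hθ.1.const_mul h).div_const 2).const_add 1).inv, fun x y hxy => ?_⟩
  simp only [contraction, hθ.2 hxy]

lemma isPredictableSeq_shift : IsPredictableSeq (shift c μ h) := fun k => by
  have hr := isPredictableSeq_contraction (c := c) (μ := μ) (h := h) k
  have hθ := isPredictableSeq_tilt (c := c) (μ := μ) (h := h) k
  refine ⟨hr.1.mul (hθ.1.const_mul h), fun x y hxy => ?_⟩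
  simp only [shift, hr.2 hxy, hθ.2 hxy]

variable {k : ℕ} {x : ℕ → ℝ}

lemma driftWalk_succ : driftWalk μ h (k + 1) x = driftWalk μ h k x + (x k + μ * h) :=
  Finset.sum_range_succ _ _

lemma expArea_succ : expArea μ h (k + 1) x = expArea μ h k x + h * exp (driftWalk μ h k x) :=
  Finset.sum_range_succ _ _

lemma expArea_mono (hh : 0 ≤ h) (x : ℕ → ℝ) : Monotone fun k => expArea μ h k x :=
  monotone_nat_of_le_succ fun _ => expArea_succ ▸ le_add_of_nonneg_right (by positivity)

lemma expArea_nonneg (hh : 0 ≤ h) : 0 ≤ expArea μ h k x :=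
  Finset.sum_nonneg fun _ _ => by positivity

@[simp]
lemma areaFactor_zero : areaFactor c μ h 0 x = 1 := by simp [areaFactor, expArea]

lemma areaFactor_succ (hU : areaFactor c μ h k x ≠ 0) :
    areaFactor c μ h (k + 1) x = areaFactor c μ h k x * (1 + h * tilt c μ h k x / 2) := by
  have : areaFactor c μ h (k + 1) x
      = areaFactor c μ h k x + c * (h * exp (driftWalk μ h k x)) := by
    rw [areaFactor, expArea_succ, areaFactor]
    ring
  rw [this, tilt]
  field_simp

@[simp]
lemma tilt_zero : tilt c μ h 0 x = 2 * c := by simp [tilt, driftWalk]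

lemma tilt_succ (hU : areaFactor c μ h k x ≠ 0) :
    tilt c μ h (k + 1) x = tilt c μ h k x * (exp (x k + μ * h) * contraction c μ h k x) := by
  rw [tilt, areaFactor_succ hU, driftWalk_succ, exp_add, contraction,
    mul_comm (areaFactor _ _ _ _ _), tilt]
  simp only [div_eq_mul_inv, mul_inv]
  ring

end Discrete

/-! ### Estimates for the transformed walk -/

/-- The increments of the transformed walk. -/
def pathTwist (c μ h : ℝ) (x : ℕ → ℝ) : ℕ → ℝ :=
  affineTwist (contraction c μ h) (shift c μ h) x

/-- The Radon–Nikodym factor of the first `n` steps of `pathTwist`. -/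
def pathWeight (c μ h : ℝ) (n : ℕ) (x : ℕ → ℝ) : ℝ :=
  twistWeight h (contraction c μ h) (shift c μ h) n x

/-- The accumulated `stepError` of the first `n` steps of a walk. -/
def walkError (h : ℝ) (n : ℕ) (x : ℕ → ℝ) : ℝ := ∑ k ∈ Finset.range n, stepError h (x k)

/-- Bounds on the first `n` steps of a walk under which `pathTwist` is controlled; one constant `K`
serves for the drift and for `tilt`. -/
structure TwistBounds (c μ h K : ℝ) (n : ℕ) (x : ℕ → ℝ) : Prop where
  one_le : 1 ≤ K
  mesh_pos : 0 < h
  mul_mesh_le : K * h ≤ 1 / 2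
  abs_drift_le : |μ| ≤ K
  areaFactor_pos : ∀ k ≤ n, 0 < areaFactor c μ h k x
  abs_tilt_le : ∀ k < n, |tilt c μ h k x| ≤ K
  abs_increment_le : ∀ k < n, |x k| ≤ 1 / 2

namespace TwistBounds

variable {c μ h K : ℝ} {n k : ℕ} {x : ℕ → ℝ}

lemma one_add_tilt_pos (H : TwistBounds c μ h K n x) (hk : k < n) :
    0 < 1 + h * tilt c μ h k x / 2 := by
  have h_succ := areaFactor_succ (H.areaFactor_pos k hk.le).ne'
  exact (mul_pos_iff_of_pos_left (H.areaFactor_pos k hk.le)).1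
    (h_succ ▸ H.areaFactor_pos (k + 1) hk)

lemma sum_log_one_add_tilt (H : TwistBounds c μ h K n x) (hk : k ≤ n) :
    ∑ j ∈ Finset.range k, log (1 + h * tilt c μ h j x / 2) = log (areaFactor c μ h k x) := by
  induction k with
  | zero => simp
  | succ k ih =>
    have hU := (H.areaFactor_pos k (by omega)).ne'
    rw [Finset.sum_range_succ, ih (by omega), areaFactor_succ hU,
      log_mul hU (H.one_add_tilt_pos hk).ne']

lemma walkError_mono (H : TwistBounds c μ h K n x) (hk : k ≤ n) :
    walkError h k x ≤ walkError h n x :=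
  Finset.sum_le_sum_of_subset_of_nonneg (Finset.range_mono hk) fun j _ _ =>
    stepError_nonneg H.mesh_pos.le (x j)

lemma abs_driftWalk_pathTwist_sub_le (H : TwistBounds c μ h K n x) (hk : k ≤ n) :
    |driftWalk μ h k (pathTwist c μ h x) - (driftWalk μ h k x - 2 * log (areaFactor c μ h k x))|
      ≤ 3 * K ^ 2 * walkError h n x := by
  have h_step (j : ℕ) (hj : j ∈ Finset.range k) :
      |pathTwist c μ h x j + μ * h - (x j + μ * h - 2 * log (1 + h * tilt c μ h j x / 2))|
        ≤ 3 * K ^ 2 * stepError h (x j) := by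
    refine le_trans (le_of_eq ?_) (abs_affine_increment_sub_le (x := x j) H.one_le H.mesh_pos
      H.mul_mesh_le (H.abs_tilt_le j ((Finset.mem_range.1 hj).trans_le hk)) rfl)
    simp only [pathTwist, affineTwist, shift, contraction]
    congr 1
    ring
  rw [← H.sum_log_one_add_tilt hk, driftWalk, driftWalk, Finset.mul_sum,
    ← Finset.sum_sub_distrib, ← Finset.sum_sub_distrib]
  calc _ ≤ ∑ j ∈ Finset.range k, 3 * K ^ 2 * stepError h (x j) :=
        (Finset.abs_sum_le_sum_abs _ _).trans (Finset.sum_le_sum h_step)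
    _ = 3 * K ^ 2 * walkError h k x := (Finset.mul_sum _ _ _).symm
    _ ≤ 3 * K ^ 2 * walkError h n x := by gcongr; exact H.walkError_mono hk

lemma affineWeight_contraction_pos (H : TwistBounds c μ h K n x) (hk : k < n) :
    0 < affineWeight h (contraction c μ h k x) (shift c μ h k x) (x k) :=
  mul_pos (abs_pos.2 (inv_ne_zero (H.one_add_tilt_pos hk).ne')) (exp_pos _)

lemma pathWeight_pos (H : TwistBounds c μ h K n x) : 0 < pathWeight c μ h n x :=
  Finset.prod_pos fun _ hk => H.affineWeight_contraction_pos (Finset.mem_range.1 hk)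

lemma abs_log_pathWeight_sub_le (H : TwistBounds c μ h K n x) :
    |tilt c μ h n x - 2 * c - 2 * (μ + 1 / 2) * log (areaFactor c μ h n x)
        - log (pathWeight c μ h n x)| ≤ 30 * K ^ 3 * walkError h n x := by
  have h_log : log (pathWeight c μ h n x) = ∑ k ∈ Finset.range n,
      log (affineWeight h (contraction c μ h k x) (shift c μ h k x) (x k)) :=
    log_prod fun k hk => (H.affineWeight_contraction_pos (Finset.mem_range.1 hk)).ne'
  have h_tilt : tilt c μ h n x - 2 * c
      = ∑ k ∈ Finset.range n, (tilt c μ h (k + 1) x - tilt c μ h k x) := by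
    rw [Finset.sum_range_sub (fun k => tilt c μ h k x), tilt_zero]
  rw [h_log, h_tilt, ← H.sum_log_one_add_tilt le_rfl, Finset.mul_sum, ← Finset.sum_sub_distrib,
    ← Finset.sum_sub_distrib, walkError, Finset.mul_sum]
  refine (Finset.abs_sum_le_sum_abs _ _).trans (Finset.sum_le_sum fun k hk => ?_)
  have hkn := Finset.mem_range.1 hk
  rw [tilt_succ (H.areaFactor_pos k hkn.le).ne', ← mul_sub_one]
  exact abs_tilt_increment_sub_log_affineWeight_le H.one_le H.mesh_pos H.mul_mesh_le
    H.abs_drift_le (H.abs_tilt_le k hkn) (H.abs_increment_le k hkn) rfl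

lemma reducedArea_succ_sub (H : TwistBounds c μ h K n x) (hk : k < n) :
    reducedArea c μ h (k + 1) x - reducedArea c μ h k x
      = h * exp (driftWalk μ h k x) / (areaFactor c μ h k x * areaFactor c μ h (k + 1) x) := by
  have hU := (H.areaFactor_pos k hk.le).ne'
  have hU' := (H.areaFactor_pos (k + 1) hk).ne'
  rw [reducedArea, reducedArea, div_sub_div _ _ hU' hU,
    mul_comm (areaFactor c μ h (k + 1) x) (areaFactor c μ h k x)]
  congr 1
  simp only [areaFactor, expArea_succ]
  ring

lemma mul_exp_eq_reducedArea_sub_mul (H : TwistBounds c μ h K n x) (hk : k < n) (z : ℝ) :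
    h * exp z = (reducedArea c μ h (k + 1) x - reducedArea c μ h k x) *
      ((1 + h * tilt c μ h k x / 2)
        * exp (z - (driftWalk μ h k x - 2 * log (areaFactor c μ h k x)))) := by
  have hU := H.areaFactor_pos k hk.le
  have hw := H.one_add_tilt_pos hk
  have h_exp : exp (z - (driftWalk μ h k x - 2 * log (areaFactor c μ h k x)))
      = exp z * areaFactor c μ h k x ^ 2 / exp (driftWalk μ h k x) := by
    rw [← exp_log (pow_pos hU 2), log_pow, ← exp_add, ← exp_sub]
    congr 1
    push_cast
    ring
  rw [H.reducedArea_succ_sub hk, areaFactor_succ hU.ne', h_exp]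
  set w := h * tilt c μ h k x / 2
  field_simp

lemma abs_mul_exp_driftWalk_pathTwist_sub_le (H : TwistBounds c μ h K n x)
    (hE : 3 * K ^ 2 * walkError h n x ≤ 1) (hk : k < n) :
    |h * exp (driftWalk μ h k (pathTwist c μ h x))
        - (reducedArea c μ h (k + 1) x - reducedArea c μ h k x)|
      ≤ (6 * K ^ 2 * walkError h n x + 3 * (K * h))
        * (reducedArea c μ h (k + 1) x - reducedArea c μ h k x) := by
  have hU := H.areaFactor_pos k hk.le
  have hU' := H.areaFactor_pos (k + 1) hk
  have hh := H.mesh_pos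
  have h_nonneg : 0 ≤ reducedArea c μ h (k + 1) x - reducedArea c μ h k x := by
    rw [H.reducedArea_succ_sub hk]
    positivity
  have hR := H.abs_driftWalk_pathTwist_sub_le hk.le
  rw [H.mul_exp_eq_reducedArea_sub_mul hk, ← mul_sub_one, abs_mul, abs_of_nonneg h_nonneg, mul_comm]
  set R := driftWalk μ h k (pathTwist c μ h x)
    - (driftWalk μ h k x - 2 * log (areaFactor c μ h k x))
  have hw := (abs_mul_div_two_le hh H.mul_mesh_le (H.abs_tilt_le k hk)).1
  set w := h * tilt c μ h k x / 2
  have h_exp := abs_exp_sub_one_le (hR.trans hE)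
  have h_exp_le : exp R ≤ 3 := by linarith [(abs_le.1 h_exp).2, hR.trans hE]
  gcongr
  calc |(1 + w) * exp R - 1| = |(exp R - 1) + w * exp R| := by congr 1; ring
    _ ≤ 2 * |R| + |w| * 3 := by
        refine (abs_add_le _ _).trans (add_le_add h_exp ?_)
        rw [abs_mul, abs_of_pos (exp_pos R)]
        gcongr
    _ ≤ _ := by linarith [abs_nonneg w]

lemma abs_expArea_pathTwist_sub_le (H : TwistBounds c μ h K n x)
    (hE : 3 * K ^ 2 * walkError h n x ≤ 1) :
    |expArea μ h n (pathTwist c μ h x) - reducedArea c μ h n x|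
      ≤ (6 * K ^ 2 * walkError h n x + 3 * (K * h)) * reducedArea c μ h n x := by
  have h_tele : reducedArea c μ h n x
      = ∑ k ∈ Finset.range n, (reducedArea c μ h (k + 1) x - reducedArea c μ h k x) := by
    rw [Finset.sum_range_sub (fun k => reducedArea c μ h k x)]
    simp [reducedArea, expArea]
  rw [h_tele, expArea, ← Finset.sum_sub_distrib, Finset.mul_sum]
  exact (Finset.abs_sum_le_sum_abs _ _).trans (Finset.sum_le_sum fun k hk =>
    H.abs_mul_exp_driftWalk_pathTwist_sub_le hE (Finset.mem_range.1 hk))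

end TwistBounds

/-! ### The limiting transformation -/

/-- The action on the endpoint `(Z t, ∫ exp Z)` of the transformation of paths
`Z ↦ Z - 2 log (1 + c ∫ exp Z)`; it is meaningful on `twistDomain c`. -/
def endpointTwist (c : ℝ) (p : ℝ × ℝ) : ℝ × ℝ :=
  (p.1 - 2 * log (1 + c * p.2), p.2 / (1 + c * p.2))

/-- The half-plane of endpoints on which the logarithm in `endpointTwist c` is meaningful. -/
def twistDomain (c : ℝ) : Set (ℝ × ℝ) := {p | 0 < 1 + c * p.2}

/-- The logarithm of the density accompanying `endpointTwist c` when `Z` has drift `ν - 1 / 2`. -/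
def logTwistDensity (ν c : ℝ) (p : ℝ × ℝ) : ℝ :=
  2 * c * exp p.1 / (1 + c * p.2) - 2 * c - 2 * ν * log (1 + c * p.2)

lemma continuousAt_endpointTwist {c : ℝ} {p : ℝ × ℝ} (hp : p ∈ twistDomain c) :
    ContinuousAt (endpointTwist c) p := by
  unfold endpointTwist
  fun_prop (disch := exact LT.lt.ne' hp)

lemma continuousAt_logTwistDensity (ν : ℝ) {c : ℝ} {p : ℝ × ℝ} (hp : p ∈ twistDomain c) :
    ContinuousAt (logTwistDensity ν c) p := by
  unfold logTwistDensity
  fun_prop (disch := exact LT.lt.ne' hp)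

lemma measurableSet_twistDomain (c : ℝ) : MeasurableSet (twistDomain c) :=
  measurableSet_lt measurable_const (by fun_prop)

lemma measurable_endpointTwist (c : ℝ) : Measurable (endpointTwist c) := by
  unfold endpointTwist
  fun_prop

lemma measurable_logTwistDensity (ν c : ℝ) : Measurable (logTwistDensity ν c) := by
  unfold logTwistDensity
  fun_prop

/-- The discretisation of the endpoint `(Z t, ∫ exp Z)`. -/
def endState (μ h : ℝ) (n : ℕ) (x : ℕ → ℝ) : ℝ × ℝ := (driftWalk μ h n x, expArea μ h n x)

lemma tendsto_of_abs_sub_le {ι : Type*} {l : Filter ι} {f g e : ι → ℝ} {a : ℝ}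
    (hg : Tendsto g l (𝓝 a)) (he : Tendsto e l (𝓝 0)) (h : ∀ᶠ i in l, |f i - g i| ≤ e i) :
    Tendsto f l (𝓝 a) := by
  have := squeeze_zero' (.of_forall fun i => abs_nonneg (f i - g i)) h he
  simpa using hg.add (tendsto_zero_iff_abs_tendsto_zero _ |>.2 this)

section Limit

variable {ι : Type*} {l : Filter ι} {c μ K : ℝ} {h : ι → ℝ} {n : ι → ℕ} {x : ι → ℕ → ℝ}
  {p : ℝ × ℝ}

theorem tendsto_endState_pathTwist (H : ∀ᶠ i in l, TwistBounds c μ (h i) K (n i) (x i))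
    (hh : Tendsto h l (𝓝 0)) (hE : Tendsto (fun i => walkError (h i) (n i) (x i)) l (𝓝 0))
    (hx : Tendsto (fun i => endState μ (h i) (n i) (x i)) l (𝓝 p)) (hp : p ∈ twistDomain c) :
    Tendsto (fun i => endState μ (h i) (n i) (pathTwist c μ (h i) (x i))) l
      (𝓝 (endpointTwist c p)) := by
  have h_twist := (continuousAt_endpointTwist hp).tendsto.comp hx
  have h_area : Tendsto (fun i => reducedArea c μ (h i) (n i) (x i)) l
      (𝓝 (endpointTwist c p).2) := h_twist.snd_nhds
  refine Tendsto.prodMk_nhds (tendsto_of_abs_sub_le h_twist.fst_nhds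
    (e := fun i => 3 * K ^ 2 * walkError (h i) (n i) (x i)) (by simpa using hE.const_mul _) ?_)
    (tendsto_of_abs_sub_le h_area (e := fun i => (6 * K ^ 2 * walkError (h i) (n i) (x i)
      + 3 * (K * h i)) * reducedArea c μ (h i) (n i) (x i)) ?_ ?_)
  · exact H.mono fun i Hi => Hi.abs_driftWalk_pathTwist_sub_le le_rfl
  · simpa using ((hE.const_mul (6 * K ^ 2)).add ((hh.const_mul K).const_mul 3)).mul h_area
  · have h_small : Tendsto (fun i => 3 * K ^ 2 * walkError (h i) (n i) (x i)) l (𝓝 0) := by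
      simpa using hE.const_mul (3 * K ^ 2)
    filter_upwards [H, h_small.eventually_le_const one_pos] with i Hi hEi
    exact Hi.abs_expArea_pathTwist_sub_le hEi

theorem tendsto_pathWeight (H : ∀ᶠ i in l, TwistBounds c μ (h i) K (n i) (x i))
    (hE : Tendsto (fun i => walkError (h i) (n i) (x i)) l (𝓝 0))
    (hx : Tendsto (fun i => endState μ (h i) (n i) (x i)) l (𝓝 p)) (hp : p ∈ twistDomain c) :
    Tendsto (fun i => pathWeight c μ (h i) (n i) (x i)) l
      (𝓝 (exp (logTwistDensity (μ + 1 / 2) c p))) := by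
  have h_density := (continuousAt_logTwistDensity (μ + 1 / 2) hp).tendsto.comp hx
  have h_log : Tendsto (fun i => log (pathWeight c μ (h i) (n i) (x i))) l
      (𝓝 (logTwistDensity (μ + 1 / 2) c p)) := by
    refine tendsto_of_abs_sub_le h_density
      (e := fun i => 30 * K ^ 3 * walkError (h i) (n i) (x i)) (by simpa using hE.const_mul _) ?_
    filter_upwards [H] with i Hi
    rw [abs_sub_comm]
    exact Hi.abs_log_pathWeight_sub_le
  refine h_log.rexp.congr' ?_
  filter_upwards [H] with i Hi
  exact exp_log Hi.pathWeight_pos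

end Limit

/-! ### Discretisation of a continuous path -/

/-- The increments of the path `b` on the grid of mesh `h`. -/
def gridIncrement (b : ℝ → ℝ) (h : ℝ) (k : ℕ) : ℝ := b ((k + 1 : ℕ) * h) - b (k * h)

lemma eventually_abs_sub_grid_le {F : ℝ → ℝ} (hF : Continuous F) {t : ℝ} (ht : 0 < t) {ε : ℝ}
    (hε : 0 < ε) :
    ∀ᶠ n : ℕ in atTop, ∀ k < n, ∀ s ∈ Icc (k * (t / n)) ((k + 1 : ℕ) * (t / n)),
      |F s - F (k * (t / n))| ≤ ε := by
  obtain ⟨δ, hδ, H⟩ := Metric.uniformContinuousOn_iff_le.1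
    ((isCompact_Icc (a := 0) (b := t)).uniformContinuousOn_of_continuous hF.continuousOn) ε hε
  filter_upwards [(tendsto_const_div_atTop_nhds_zero_nat t).eventually_le_const hδ,
    eventually_gt_atTop 0] with n hnδ hn k hk s hs
  have h_end : ((k + 1 : ℕ) : ℝ) * (t / n) ≤ t :=
    calc _ ≤ n * (t / n) := by gcongr; exact hk
      _ = t := by field_simp
  have h_start : 0 ≤ k * (t / n) := by positivity
  have h_length : ((k + 1 : ℕ) : ℝ) * (t / n) = k * (t / n) + t / n := by push_cast; ring
  refine H s ⟨h_start.trans hs.1, hs.2.trans h_end⟩ _ ⟨h_start, hs.1.trans (hs.2.trans h_end)⟩ ?_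
  rw [dist_eq, abs_of_nonneg (by linarith [hs.1])]
  linarith [hs.2]

lemma abs_integral_sub_mul_le {F : ℝ → ℝ} (hF : Continuous F) {a b ε : ℝ} (hab : a ≤ b)
    (h : ∀ s ∈ Icc a b, |F s - F a| ≤ ε) :
    |(∫ s in a..b, F s) - (b - a) * F a| ≤ ε * (b - a) := by
  have h_const : (b - a) * F a = ∫ _ in a..b, F a := by
    rw [intervalIntegral.integral_const, smul_eq_mul]
  rw [h_const, ← intervalIntegral.integral_sub (hF.intervalIntegrable _ _)
    intervalIntegrable_const, ← abs_of_nonneg (sub_nonneg.2 hab)]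
  refine intervalIntegral.norm_integral_le_of_norm_le_const (f := fun s => F s - F a)
    fun s hs => h s ?_
  rw [uIoc_of_le hab] at hs
  exact ⟨hs.1.le, hs.2⟩

theorem tendsto_riemannSum {F : ℝ → ℝ} (hF : Continuous F) {t : ℝ} (ht : 0 < t) :
    Tendsto (fun n : ℕ => ∑ k ∈ Finset.range n, t / n * F (k * (t / n))) atTop
      (𝓝 (∫ s in (0 : ℝ)..t, F s)) := by
  refine Metric.tendsto_nhds.2 fun ε hε => ?_
  filter_upwards [eventually_abs_sub_grid_le hF ht (ε := ε / (2 * t)) (by positivity),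
    eventually_gt_atTop 0] with n h_grid hn
  have h_split : ∑ k ∈ Finset.range n, ∫ s in (k * (t / n))..((k + 1 : ℕ) * (t / n)), F s
      = ∫ s in (0 : ℝ)..t, F s := by
    rw [intervalIntegral.sum_integral_adjacent_intervals (a := fun k : ℕ => (k : ℝ) * (t / n))
      fun k _ => hF.intervalIntegrable _ _]
    congr 1
    · simp
    · field_simp
  have h_length (k : ℕ) : ((k + 1 : ℕ) : ℝ) * (t / n) - k * (t / n) = t / n := by push_cast; ring
  rw [dist_comm, dist_eq, ← h_split, ← Finset.sum_sub_distrib]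
  calc _ ≤ ∑ k ∈ Finset.range n, ε / (2 * t) * (t / n) := by
        refine (Finset.abs_sum_le_sum_abs _ _).trans (Finset.sum_le_sum fun k hk => ?_)
        have h_le : (k : ℝ) * (t / n) ≤ (k + 1 : ℕ) * (t / n) :=
          sub_nonneg.1 ((h_length k).symm ▸ by positivity)
        simpa only [h_length] using
          abs_integral_sub_mul_le hF h_le (h_grid k (Finset.mem_range.1 hk))
    _ = ε / 2 := by rw [Finset.sum_const, Finset.card_range, nsmul_eq_mul]; field_simp
    _ < ε := half_lt_self hε

section Path

variable {b : ℝ → ℝ} {μ t : ℝ}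

lemma driftWalk_gridIncrement (hb₀ : b 0 = 0) (μ h : ℝ) (k : ℕ) :
    driftWalk μ h k (gridIncrement b h) = b (k * h) + μ * (k * h) := by
  have h_tele := Finset.sum_range_sub (fun j : ℕ => b (j * h) + μ * (j * h)) k
  simp only [Nat.cast_zero, zero_mul, mul_zero, hb₀, add_zero, sub_zero] at h_tele
  rw [← h_tele, driftWalk]
  refine Finset.sum_congr rfl fun j _ => ?_
  simp only [gridIncrement]
  push_cast
  ring

theorem tendsto_endState_gridIncrement (hb : Continuous b) (hb₀ : b 0 = 0) (μ : ℝ) (ht : 0 < t) :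
    Tendsto (fun n : ℕ => endState μ (t / n) n (gridIncrement b (t / n))) atTop
      (𝓝 (b t + μ * t, ∫ s in (0 : ℝ)..t, exp (b s + μ * s))) := by
  refine Tendsto.prodMk_nhds (tendsto_const_nhds.congr' ?_) ?_
  · filter_upwards [eventually_gt_atTop 0] with n hn
    rw [driftWalk_gridIncrement hb₀, mul_div_cancel₀ t (by positivity)]
  · simp only [expArea, driftWalk_gridIncrement hb₀]
    exact tendsto_riemannSum (by fun_prop) ht

lemma min_one_areaFactor_le {c h : ℝ} (hh : 0 ≤ h) {k n : ℕ} (hk : k ≤ n) (x : ℕ → ℝ) :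
    min 1 (areaFactor c μ h n x) ≤ areaFactor c μ h k x := by
  rcases le_total 0 c with hc | hc
  · exact min_le_of_left_le (le_add_of_nonneg_right (mul_nonneg hc (expArea_nonneg hh)))
  · exact min_le_of_right_le
      (add_le_add_right (mul_le_mul_of_nonpos_left (expArea_mono hh x hk) hc) 1)

lemma abs_tilt_le {c h m δ : ℝ} {k : ℕ} {x : ℕ → ℝ} (hZ : driftWalk μ h k x ≤ m) (hδ : 0 < δ)
    (hU : δ ≤ areaFactor c μ h k x) : |tilt c μ h k x| ≤ 2 * |c| * exp m / δ := by
  rw [tilt, abs_div, abs_mul, abs_mul, abs_two, abs_of_pos (exp_pos _),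
    abs_of_pos (hδ.trans_le hU)]
  gcongr

lemma exists_driftWalk_gridIncrement_le (hb : Continuous b) (hb₀ : b 0 = 0) (μ : ℝ)
    (ht : 0 < t) :
    ∃ m, ∀ n : ℕ, ∀ k < n, driftWalk μ (t / n) k (gridIncrement b (t / n)) ≤ m := by
  obtain ⟨m, hm⟩ := (isCompact_Icc (a := 0) (b := t)).exists_bound_of_continuousOn
    (f := fun s => b s + μ * s) (by fun_prop)
  refine ⟨m, fun n k hk => ?_⟩
  have hn : (0 : ℝ) < n := by exact_mod_cast k.zero_le.trans_lt hk
  rw [driftWalk_gridIncrement hb₀]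
  refine (le_abs_self _).trans (hm _ ⟨by positivity, ?_⟩)
  calc (k : ℝ) * (t / n) ≤ n * (t / n) := by gcongr
    _ = t := by field_simp

theorem exists_eventually_twistBounds (hb : Continuous b) (hb₀ : b 0 = 0) {c : ℝ} (ht : 0 < t)
    (hpos : 0 < 1 + c * ∫ s in (0 : ℝ)..t, exp (b s + μ * s)) :
    ∃ K, ∀ᶠ n : ℕ in atTop, TwistBounds c μ (t / n) K n (gridIncrement b (t / n)) := by
  obtain ⟨m, hm⟩ := exists_driftWalk_gridIncrement_le hb hb₀ μ ht
  obtain ⟨δ, hδ, hδ_lt⟩ := exists_between (lt_min one_pos hpos)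
  have h_factor : ∀ᶠ n : ℕ in atTop,
      δ < min 1 (areaFactor c μ (t / n) n (gridIncrement b (t / n))) := by
    have h_area := ((tendsto_endState_gridIncrement hb hb₀ μ ht).snd_nhds.const_mul c).const_add 1
    exact (tendsto_const_nhds.min h_area).eventually_const_lt hδ_lt
  set K := max (max 1 |μ|) (2 * |c| * exp m / δ)
  have h_mesh : Tendsto (fun n : ℕ => K * (t / n)) atTop (𝓝 0) := by
    simpa using (tendsto_const_div_atTop_nhds_zero_nat t).const_mul K
  refine ⟨K, ?_⟩
  filter_upwards [h_factor, h_mesh.eventually_le_const (by norm_num : (0 : ℝ) < 1 / 2),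
    eventually_abs_sub_grid_le hb ht (ε := 1 / 2) (by norm_num), eventually_gt_atTop 0]
    with n hδn hKn h_grid hn
  have hh : 0 < t / n := by positivity
  have h_le {k : ℕ} (hk : k ≤ n) := (hδn.trans_le (min_one_areaFactor_le hh.le hk _)).le
  exact
    { one_le := (le_max_left _ _).trans (le_max_left _ _)
      mesh_pos := hh
      mul_mesh_le := hKn
      abs_drift_le := (le_max_right _ _).trans (le_max_left _ _)
      areaFactor_pos := fun k hk => hδ.trans_le (h_le hk)
      abs_tilt_le := fun k hk => (abs_tilt_le (hm n k hk) hδ (h_le hk.le)).trans (le_max_right _ _)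
      abs_increment_le := fun k hk => h_grid k hk _ ⟨by gcongr; simp, le_rfl⟩ }

lemma walkError_grid (t : ℝ) {n : ℕ} (hn : 0 < n) (x : ℕ → ℝ) :
    walkError (t / n) n x = ∑ k ∈ Finset.range n, |x k| ^ 3 + t * √(t / n) := by
  simp only [walkError, stepError, Finset.sum_add_distrib, Finset.sum_const, Finset.card_range,
    nsmul_eq_mul]
  field_simp

end Path

/-! ### Brownian increments -/

lemma lintegral_abs_pow_gaussianReal (v : ℝ≥0) (p : ℕ) :
    ∫⁻ x, ENNReal.ofReal (|x| ^ p) ∂gaussianReal 0 v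
      = ENNReal.ofReal (√v ^ p) * ∫⁻ x, ENNReal.ofReal (|x| ^ p) ∂gaussianReal 0 1 := by
  have h_scale : gaussianReal 0 v = (gaussianReal 0 1).map (√v * ·) := by
    rw [gaussianReal_map_const_mul, mul_zero, mul_one]
    congr 1
    ext
    simp
  rw [h_scale, lintegral_map (by fun_prop) (by fun_prop), ← lintegral_const_mul _ (by fun_prop)]
  refine lintegral_congr fun x => ?_
  rw [← ENNReal.ofReal_mul (by positivity), abs_mul, mul_pow, abs_of_nonneg (sqrt_nonneg _)]

lemma lintegral_abs_pow_gaussianReal_ne_top (v : ℝ≥0) (p : ℕ) :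
    ∫⁻ x, ENNReal.ofReal (|x| ^ p) ∂gaussianReal 0 v ≠ ∞ := by
  have h_moment := (memLp_id_gaussianReal (μ := 0) (v := v) p).integrable_norm_pow'
  simpa using h_moment.lintegral_lt_top.ne

lemma ae_tendsto_zero_of_tsum_lintegral_ne_top {α : Type*} [MeasurableSpace α] {Q : Measure α}
    {f : ℕ → α → ℝ} (hf : ∀ j, Measurable (f j)) (hf₀ : ∀ j a, 0 ≤ f j a)
    (h : ∑' j, ∫⁻ a, ENNReal.ofReal (f j a) ∂Q ≠ ∞) :
    ∀ᵐ a ∂Q, Tendsto (fun j => f j a) atTop (𝓝 0) := by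
  rw [← lintegral_tsum fun j => (hf j).ennreal_ofReal.aemeasurable] at h
  filter_upwards [ae_lt_top (Measurable.tsum fun j => (hf j).ennreal_ofReal) h] with a ha
  have h_zero := (ENNReal.tendsto_toReal ENNReal.zero_ne_top).comp
    (ENNReal.tendsto_atTop_zero_of_tsum_ne_top ha.ne)
  simpa [Function.comp_def, ENNReal.toReal_ofReal (hf₀ _ a)] using h_zero

section Brownian

variable {P B}

lemma measurable_gridIncrement (hB : IsBrownianMotion P B) (h : ℝ) (k : ℕ) :
    Measurable fun ω => gridIncrement (B · ω) h k :=
  (hB.measurable _).sub (hB.measurable _)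

lemma map_gridIncrement_apply (hB : IsBrownianMotion P B) {h : ℝ} (hh : 0 ≤ h) (k : ℕ) :
    P.map (fun ω => gridIncrement (B · ω) h k) = gaussianReal 0 h.toNNReal := by
  have h_law := hB.gaussian_increments (k * h) ((k + 1 : ℕ) * h) (by positivity)
    (by gcongr; simp)
  rwa [← sub_mul, Nat.cast_succ, add_sub_cancel_left, one_mul, ← Nat.cast_succ] at h_law

lemma map_gridIncrement (hB : IsBrownianMotion P B) {h : ℝ} (hh : 0 ≤ h) :
    P.map (fun ω => gridIncrement (B · ω) h)
      = Measure.infinitePi fun _ => gaussianReal 0 h.toNNReal := by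
  have h_indep : iIndepFun (fun k ω => gridIncrement (B · ω) h k) P :=
    hB.indep_increments (fun k => k * h) (fun i j hij => by dsimp only; gcongr) (by simp)
  rw [h_indep.map_fun_eq_infinitePi_map (measurable_gridIncrement hB h)]
  simp only [map_gridIncrement_apply hB hh]

lemma measurable_pathTwist (c μ h : ℝ) : Measurable (pathTwist c μ h) :=
  measurable_affineTwist isPredictableSeq_contraction isPredictableSeq_shift

lemma measurable_pathWeight (c μ h : ℝ) (n : ℕ) : Measurable (pathWeight c μ h n) :=
  measurable_twistWeight h isPredictableSeq_contraction isPredictableSeq_shift n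

theorem lintegral_pathTwist_gridIncrement_le (hB : IsBrownianMotion P B) (c μ : ℝ) {h : ℝ}
    (hh : 0 < h) {n : ℕ} {g : (ℕ → ℝ) → ℝ≥0∞} (hg : Measurable g) (hgn : DependsOn g (Iio n)) :
    ∫⁻ ω, g (pathTwist c μ h (gridIncrement (B · ω) h))
        * ENNReal.ofReal (pathWeight c μ h n (gridIncrement (B · ω) h)) ∂P
      ≤ ∫⁻ ω, g (gridIncrement (B · ω) h) ∂P := by
  have h_twist := lintegral_twistWeight_le (Real.toNNReal_pos.2 hh).ne'
    (isPredictableSeq_contraction (c := c) (μ := μ) (h := h))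
    (isPredictableSeq_shift (c := c) (μ := μ) (h := h)) n hg hgn
  have h_meas : Measurable fun ω => gridIncrement (B · ω) h :=
    measurable_pi_lambda _ (measurable_gridIncrement hB h)
  have h_weighted : Measurable fun x => g (pathTwist c μ h x)
      * ENNReal.ofReal (pathWeight c μ h n x) :=
    (hg.comp (measurable_pathTwist c μ h)).mul (measurable_pathWeight c μ h n).ennreal_ofReal
  rw [Real.coe_toNNReal _ hh.le] at h_twist
  rw [← lintegral_map hg h_meas, ← lintegral_map h_weighted h_meas, map_gridIncrement hB hh.le]
  exact h_twist

/-- The numbers of cells of the grids along which the limit is taken. They grow fast enough for the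
expected sums of the cubes of the increments to be summable. -/
def gridSize (j : ℕ) : ℕ := (j + 1) ^ 4

lemma gridSize_pos (j : ℕ) : 0 < gridSize j := by unfold gridSize; positivity

lemma tendsto_gridSize : Tendsto gridSize atTop atTop :=
  (tendsto_pow_atTop four_ne_zero).comp (tendsto_add_atTop_nat 1)

lemma lintegral_sum_abs_gridIncrement_pow (hB : IsBrownianMotion P B) {h : ℝ} (hh : 0 ≤ h)
    (n p : ℕ) :
    ∫⁻ ω, ENNReal.ofReal (∑ k ∈ Finset.range n, |gridIncrement (B · ω) h k| ^ p) ∂P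
      = ENNReal.ofReal (n * √h ^ p) * ∫⁻ x, ENNReal.ofReal (|x| ^ p) ∂gaussianReal 0 1 := by
  have h_moment (k : ℕ) : ∫⁻ ω, ENNReal.ofReal (|gridIncrement (B · ω) h k| ^ p) ∂P
      = ENNReal.ofReal (√h ^ p) * ∫⁻ x, ENNReal.ofReal (|x| ^ p) ∂gaussianReal 0 1 := by
    rw [← lintegral_map (f := fun x => ENNReal.ofReal (|x| ^ p)) (by fun_prop)
      (measurable_gridIncrement hB h k), map_gridIncrement_apply hB hh,
      lintegral_abs_pow_gaussianReal, Real.coe_toNNReal _ hh]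
  have h_split (ω : Ω) : ENNReal.ofReal (∑ k ∈ Finset.range n, |gridIncrement (B · ω) h k| ^ p)
      = ∑ k ∈ Finset.range n, ENNReal.ofReal (|gridIncrement (B · ω) h k| ^ p) :=
    ENNReal.ofReal_sum_of_nonneg fun k _ => by positivity
  simp only [h_split]
  rw [lintegral_finsetSum _ fun k _ =>
    ((measurable_gridIncrement hB h k).abs.pow_const p).ennreal_ofReal]
  simp only [h_moment, Finset.sum_const, Finset.card_range, nsmul_eq_mul]
  rw [← mul_assoc, ENNReal.ofReal_mul (by positivity), ENNReal.ofReal_natCast]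

lemma gridSize_mul_sqrt_pow_three {t : ℝ} (ht : 0 ≤ t) (j : ℕ) :
    gridSize j * √(t / gridSize j) ^ 3 = √t ^ 3 * (1 / ((j + 1 : ℕ) : ℝ) ^ 2) := by
  have h_sqrt : √(gridSize j : ℝ) = ((j + 1 : ℕ) : ℝ) ^ 2 := by
    rw [gridSize, sqrt_eq_iff_mul_self_eq (by positivity) (by positivity)]
    push_cast
    ring
  rw [sqrt_div ht, h_sqrt, gridSize]
  push_cast
  field_simp

theorem ae_tendsto_sum_abs_gridIncrement_pow_three (hB : IsBrownianMotion P B) {t : ℝ}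
    (ht : 0 ≤ t) :
    ∀ᵐ ω ∂P, Tendsto (fun j => ∑ k ∈ Finset.range (gridSize j),
      |gridIncrement (B · ω) (t / gridSize j) k| ^ 3) atTop (𝓝 0) := by
  refine ae_tendsto_zero_of_tsum_lintegral_ne_top (fun j => Finset.measurable_fun_sum _ fun k _ =>
    (measurable_gridIncrement hB _ k).abs.pow_const 3) (fun j ω =>
    Finset.sum_nonneg fun k _ => pow_nonneg (abs_nonneg _) 3) ?_
  have h_mean (j : ℕ) := lintegral_sum_abs_gridIncrement_pow hB
    (h := t / gridSize j) (by positivity) (gridSize j) 3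
  simp only [h_mean, gridSize_mul_sqrt_pow_three ht]
  rw [ENNReal.tsum_mul_right]
  refine ENNReal.mul_ne_top (Summable.tsum_ofReal_ne_top ?_)
    (lintegral_abs_pow_gaussianReal_ne_top 1 3)
  exact ((summable_nat_add_iff 1).2 (summable_one_div_nat_pow.2 one_lt_two)).mul_left _

theorem ae_tendsto_walkError (hB : IsBrownianMotion P B) {t : ℝ} (ht : 0 ≤ t) :
    ∀ᵐ ω ∂P, Tendsto (fun j => walkError (t / gridSize j) (gridSize j)
      (gridIncrement (B · ω) (t / gridSize j))) atTop (𝓝 0) := by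
  filter_upwards [ae_tendsto_sum_abs_gridIncrement_pow_three hB ht] with ω hω
  have h_mesh : Tendsto (fun j => t * √(t / gridSize j)) atTop (𝓝 0) := by
    simpa using (((tendsto_const_div_atTop_nhds_zero_nat t).comp tendsto_gridSize).sqrt).const_mul t
  simpa only [walkError_grid t (gridSize_pos _), add_zero] using hω.add h_mesh

end Brownian

/-! ### Quasi-invariance of the law of the endpoint -/

/-- The pair formed by the value at time `t` of `X` with drift `ν - 1 / 2` and the integral of its
exponential up to time `t`. -/
def endpoint {α : Type*} (X : ℝ → α → ℝ) (ν t : ℝ) (a : α) : ℝ × ℝ :=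
  (X t a + (ν - 1 / 2) * t, Adrift X ν t a)

/-- A law `m` on the plane is twist-subinvariant if every `endpointTwist c`, restricted to its
domain and weighted by its density, sends `m` to a measure below `m`. -/
def IsTwistSubinvariant (ν : ℝ) (m : Measure (ℝ × ℝ)) : Prop :=
  ∀ c : ℝ, ((m.restrict (twistDomain c)).withDensity
    fun p => ENNReal.ofReal (exp (logTwistDensity ν c p))).map (endpointTwist c) ≤ m

lemma measurable_endState (μ h : ℝ) (n : ℕ) : Measurable (endState μ h n) :=
  (isPredictableSeq_driftWalk n).1.prodMk (isPredictableSeq_expArea n).1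

lemma dependsOn_endState (μ h : ℝ) (n : ℕ) : DependsOn (endState μ h n) (Iio n) :=
  fun _ _ hxy =>
    Prod.ext ((isPredictableSeq_driftWalk n).2 hxy) ((isPredictableSeq_expArea n).2 hxy)

section Endpoint

variable {P B} {t : ℝ}

lemma tendsto_endState_endpoint (hB : IsBrownianMotion P B) (ν : ℝ) (ht : 0 < t) (ω : Ω) :
    Tendsto (fun n : ℕ => endState (ν - 1 / 2) (t / n) n (gridIncrement (B · ω) (t / n))) atTop
      (𝓝 (endpoint B ν t ω)) :=
  tendsto_endState_gridIncrement (hB.continuous_paths ω) (hB.start ω) _ ht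

lemma measurable_endState_gridIncrement (hB : IsBrownianMotion P B) (μ h : ℝ) (n : ℕ) :
    Measurable fun ω => endState μ h n (gridIncrement (B · ω) h) :=
  (measurable_endState μ h n).comp (measurable_pi_lambda _ (measurable_gridIncrement hB h))

lemma measurable_endpoint (hB : IsBrownianMotion P B) (ν : ℝ) (ht : 0 < t) :
    Measurable (endpoint B ν t) :=
  measurable_of_tendsto_metrizable (fun _ => measurable_endState_gridIncrement hB _ _ _)
    (tendsto_pi_nhds.2 (tendsto_endState_endpoint hB ν ht))

lemma tendsto_lintegral_endState (hB : IsBrownianMotion P B) (ν : ℝ) (ht : 0 < t)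
    (f : BoundedContinuousFunction (ℝ × ℝ) ℝ≥0) :
    Tendsto (fun n : ℕ => ∫⁻ ω, f (endState (ν - 1 / 2) (t / n) n
        (gridIncrement (B · ω) (t / n))) ∂P) atTop
      (𝓝 (∫⁻ ω, f (endpoint B ν t ω) ∂P)) := by
  have := hB.isProbabilityMeasure
  refine tendsto_lintegral_of_dominated_convergence (fun _ => (nndist f 0 : ℝ≥0∞))
    (fun n => ?_) (fun n => ?_) (by simp) ?_
  · exact f.continuous.measurable.coe_nnreal_ennreal.comp
      (measurable_endState_gridIncrement hB _ _ n)
  · exact .of_forall fun ω =>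
      ENNReal.coe_le_coe.2 (BoundedContinuousFunction.NNReal.upper_bound f _)
  · exact .of_forall fun ω => ENNReal.tendsto_coe.2
      ((f.continuous.tendsto _).comp (tendsto_endState_endpoint hB ν ht ω))

lemma ae_tendsto_pathTwist_mul_pathWeight (hB : IsBrownianMotion P B) (ν c : ℝ) (ht : 0 < t)
    (f : BoundedContinuousFunction (ℝ × ℝ) ℝ≥0) :
    ∀ᵐ ω ∂P, endpoint B ν t ω ∈ twistDomain c →
      Tendsto (fun j => (f (endState (ν - 1 / 2) (t / gridSize j) (gridSize j)
          (pathTwist c (ν - 1 / 2) (t / gridSize j)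
            (gridIncrement (B · ω) (t / gridSize j)))) : ℝ≥0∞)
        * ENNReal.ofReal (pathWeight c (ν - 1 / 2) (t / gridSize j) (gridSize j)
            (gridIncrement (B · ω) (t / gridSize j)))) atTop
        (𝓝 (f (endpointTwist c (endpoint B ν t ω))
          * ENNReal.ofReal (exp (logTwistDensity ν c (endpoint B ν t ω))))) := by
  filter_upwards [ae_tendsto_walkError hB ht.le] with ω h_error hpos
  obtain ⟨K, hK⟩ := exists_eventually_twistBounds (hB.continuous_paths ω) (hB.start ω) ht hpos
  have h_bounds := tendsto_gridSize.eventually hK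
  have h_end := (tendsto_endState_endpoint hB ν ht ω).comp tendsto_gridSize
  have h_mesh := (tendsto_const_div_atTop_nhds_zero_nat t).comp tendsto_gridSize
  have h_twist := tendsto_endState_pathTwist h_bounds h_mesh h_error h_end hpos
  have h_weight := tendsto_pathWeight h_bounds h_error h_end hpos
  rw [sub_add_cancel] at h_weight
  exact ENNReal.Tendsto.mul (ENNReal.tendsto_coe.2 ((f.continuous.tendsto _).comp h_twist))
    (.inr ENNReal.ofReal_ne_top) (ENNReal.tendsto_ofReal h_weight) (.inr ENNReal.coe_ne_top)

theorem setLIntegral_endpointTwist_le (hB : IsBrownianMotion P B) (ν c : ℝ) (ht : 0 < t)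
    (f : BoundedContinuousFunction (ℝ × ℝ) ℝ≥0) :
    ∫⁻ ω in endpoint B ν t ⁻¹' twistDomain c, f (endpointTwist c (endpoint B ν t ω))
        * ENNReal.ofReal (exp (logTwistDensity ν c (endpoint B ν t ω))) ∂P
      ≤ ∫⁻ ω, f (endpoint B ν t ω) ∂P := by
  set μ := ν - 1 / 2
  let ξ (j : ℕ) (ω : Ω) : ℕ → ℝ := gridIncrement (B · ω) (t / gridSize j)
  let F (j : ℕ) (x : ℕ → ℝ) : ℝ≥0∞ :=
    f (endState μ (t / gridSize j) (gridSize j) (pathTwist c μ (t / gridSize j) x))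
      * ENNReal.ofReal (pathWeight c μ (t / gridSize j) (gridSize j) x)
  have hf : Measurable fun p => (f p : ℝ≥0∞) := f.continuous.measurable.coe_nnreal_ennreal
  have hF (j : ℕ) : Measurable fun ω => F j (ξ j ω) :=
    ((hf.comp ((measurable_endState μ _ _).comp (measurable_pathTwist c μ _))).mul
      (measurable_pathWeight c μ _ _).ennreal_ofReal).comp
      (measurable_pi_lambda _ (measurable_gridIncrement hB _))
  have h_grid (j : ℕ) : ∫⁻ ω, F j (ξ j ω) ∂P
      ≤ ∫⁻ ω, f (endState μ (t / gridSize j) (gridSize j) (ξ j ω)) ∂P :=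
    lintegral_pathTwist_gridIncrement_le hB c μ (div_pos ht (by exact_mod_cast gridSize_pos j))
      (hf.comp (measurable_endState μ _ _))
      fun _ _ hxy => by simp only [Function.comp, dependsOn_endState μ _ _ hxy]
  have h_domain := measurable_endpoint hB ν ht (measurableSet_twistDomain c)
  calc _ ≤ ∫⁻ ω in endpoint B ν t ⁻¹' twistDomain c, liminf (fun j => F j (ξ j ω)) atTop ∂P :=
        setLIntegral_mono_ae' h_domain <| (ae_tendsto_pathTwist_mul_pathWeight hB ν c ht f).mono
          fun ω h hω => (h hω).liminf_eq.ge
    _ ≤ ∫⁻ ω, liminf (fun j => F j (ξ j ω)) atTop ∂P := setLIntegral_le_lintegral _ _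
    _ ≤ liminf (fun j => ∫⁻ ω, F j (ξ j ω) ∂P) atTop := lintegral_liminf_le hF
    _ ≤ liminf (fun j => ∫⁻ ω, f (endState μ (t / gridSize j) (gridSize j) (ξ j ω)) ∂P) atTop :=
        liminf_le_liminf (.of_forall h_grid)
    _ = _ := ((tendsto_lintegral_endState hB ν ht f).comp tendsto_gridSize).liminf_eq

theorem isTwistSubinvariant_map_endpoint (hB : IsBrownianMotion P B) (ν : ℝ) (ht : 0 < t) :
    IsTwistSubinvariant ν (P.map (endpoint B ν t)) := fun c => by
  have := hB.isProbabilityMeasure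
  have h_end := measurable_endpoint hB ν ht
  have h_density := (measurable_logTwistDensity ν c).exp.ennreal_ofReal
  refine measure_le_of_forall_lintegral_boundedContinuous_le fun f => ?_
  have hf : Measurable fun p => (f p : ℝ≥0∞) := f.continuous.measurable.coe_nnreal_ennreal
  have hf_twist : Measurable fun p => (f (endpointTwist c p) : ℝ≥0∞) :=
    hf.comp (measurable_endpointTwist c)
  rw [lintegral_map hf (measurable_endpointTwist c),
    lintegral_withDensity_eq_lintegral_mul _ h_density hf_twist,
    setLIntegral_map (measurableSet_twistDomain c) (h_density.mul hf_twist) h_end,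
    lintegral_map hf h_end]
  simpa only [Pi.mul_apply, mul_comm] using
    setLIntegral_endpointTwist_le hB ν c ht f

end Endpoint

/-! ### The consequences of twist-subinvariance -/

lemma one_add_neg_mul_endpointTwist {c : ℝ} {p : ℝ × ℝ} (hp : p ∈ twistDomain c) :
    1 + -c * (endpointTwist c p).2 = (1 + c * p.2)⁻¹ := by
  have hp' : 1 + c * p.2 ≠ 0 := LT.lt.ne' hp
  rw [endpointTwist]
  field_simp
  ring

lemma endpointTwist_mem_twistDomain_neg {c : ℝ} {p : ℝ × ℝ} (hp : p ∈ twistDomain c) :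
    endpointTwist c p ∈ twistDomain (-c) := by
  rw [twistDomain, mem_ofPred_eq, one_add_neg_mul_endpointTwist hp]
  exact inv_pos.2 hp

lemma logTwistDensity_neg_endpointTwist (ν : ℝ) {c : ℝ} {p : ℝ × ℝ} (hp : p ∈ twistDomain c) :
    logTwistDensity ν (-c) (endpointTwist c p) = -logTwistDensity ν c p := by
  have hp' : 0 < 1 + c * p.2 := hp
  have h_exp : exp (endpointTwist c p).1 = exp p.1 / (1 + c * p.2) ^ 2 := by
    rw [endpointTwist, exp_sub, two_mul, exp_add, exp_log hp', sq]
  simp only [logTwistDensity]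
  rw [one_add_neg_mul_endpointTwist hp, log_inv, h_exp]
  field_simp
  ring

namespace IsTwistSubinvariant

variable {ν : ℝ} {m : Measure (ℝ × ℝ)}

lemma setLIntegral_le (hm : IsTwistSubinvariant ν m) (c : ℝ) {g : ℝ × ℝ → ℝ≥0∞}
    (hg : Measurable g) :
    ∫⁻ p in twistDomain c, ENNReal.ofReal (exp (logTwistDensity ν c p)) * g (endpointTwist c p) ∂m
      ≤ ∫⁻ p, g p ∂m := by
  have h := lintegral_mono' (hm c) (le_refl g)
  have hg_twist : Measurable fun p => g (endpointTwist c p) := hg.comp (measurable_endpointTwist c)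
  rwa [lintegral_map hg (measurable_endpointTwist c), lintegral_withDensity_eq_lintegral_mul _
    (measurable_logTwistDensity ν c).exp.ennreal_ofReal hg_twist] at h

theorem setLIntegral_exp_logTwistDensity (hm : IsTwistSubinvariant ν m) (c : ℝ) :
    ∫⁻ p in twistDomain c, ENNReal.ofReal (exp (logTwistDensity ν c p)) ∂m
      = m (twistDomain (-c)) := by
  have h_density := (measurable_logTwistDensity ν c).exp.ennreal_ofReal
  apply le_antisymm
  · rw [← lintegral_indicator_one (measurableSet_twistDomain (-c))]
    refine le_of_eq_of_le (setLIntegral_congr_fun (measurableSet_twistDomain c) fun p hp => ?_)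
      (hm.setLIntegral_le c (measurable_one.indicator (measurableSet_twistDomain (-c))))
    simp [endpointTwist_mem_twistDomain_neg hp]
  · rw [← setLIntegral_one, ← lintegral_indicator (measurableSet_twistDomain c)]
    refine le_of_eq_of_le
      (setLIntegral_congr_fun (measurableSet_twistDomain (-c)) fun p hp => ?_)
      (hm.setLIntegral_le (-c) (h_density.indicator (measurableSet_twistDomain c)))
    have h_mem := endpointTwist_mem_twistDomain_neg hp
    have h_inv := logTwistDensity_neg_endpointTwist ν hp
    rw [neg_neg] at h_mem h_inv
    rw [indicator_of_mem h_mem, h_inv, ← ENNReal.ofReal_mul (exp_pos _).le, ← exp_add,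
      add_neg_cancel, exp_zero, ENNReal.ofReal_one]

lemma measure_snd_eq_zero_of_measure_snd_eq_zero (hm : IsTwistSubinvariant ν m) {a b : ℝ}
    (ha : 0 < a) (hb : 0 < b) (h : m {p | p.2 = b} = 0) : m {p | p.2 = a} = 0 := by
  set c := b⁻¹ - a⁻¹
  have h_factor : 1 + c * a = a / b := by
    simp only [c]
    field_simp
    ring
  have h_level : MeasurableSet {p : ℝ × ℝ | p.2 = b} := measurable_snd (measurableSet_singleton b)
  have h_ac := withDensity_absolutelyContinuous' (μ := m.restrict (twistDomain c))
    (measurable_logTwistDensity ν c).exp.ennreal_ofReal.aemeasurable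
    (.of_forall fun p => (ENNReal.ofReal_pos.2 (exp_pos _)).ne')
  have h_null := hm c {p | p.2 = b}
  rw [Measure.map_apply (measurable_endpointTwist c) h_level, h, nonpos_iff_eq_zero] at h_null
  replace h_null := h_ac h_null
  rw [Measure.restrict_apply (measurable_endpointTwist c h_level)] at h_null
  refine measure_mono_null (fun p (hp : p.2 = a) => mem_inter ?_ ?_) h_null
  · simp only [mem_preimage, mem_ofPred_eq, endpointTwist, hp, h_factor]
    field_simp
  · rw [twistDomain, mem_ofPred_eq, hp, h_factor]
    positivity

theorem measure_snd_eq_zero [SFinite m] (hm : IsTwistSubinvariant ν m) {a : ℝ} (ha : 0 < a) :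
    m {p | p.2 = a} = 0 := by
  have h_countable := Measure.countable_meas_level_set_pos (μ := m) measurable_snd
  have h_uncountable : ¬ (Ioi (0 : ℝ)).Countable := fun h => by
    simpa using h.measure_zero volume
  obtain ⟨b, hb, hb_null⟩ : (Ioi 0 \ {b | 0 < m {p | p.2 = b}}).Nonempty :=
    sdiff_nonempty.2 fun h_subset => h_uncountable (h_countable.mono h_subset)
  exact hm.measure_snd_eq_zero_of_measure_snd_eq_zero ha hb (by simpa using hb_null)

theorem measure_snd_le [SFinite m] (hm : IsTwistSubinvariant ν m) {a : ℝ} (ha : 0 < a) :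
    m {p | p.2 ≤ a}
      = ∫⁻ p in twistDomain a⁻¹, ENNReal.ofReal (exp (logTwistDensity ν a⁻¹ p)) ∂m := by
  have h_lt : twistDomain (-a⁻¹) = {p | p.2 < a} := by
    ext p
    rw [twistDomain, mem_ofPred_eq, mem_ofPred_eq, neg_mul, ← sub_eq_add_neg, sub_pos,
      inv_mul_lt_one₀ ha]
  rw [hm.setLIntegral_exp_logTwistDensity, h_lt]
  have h_ne : ∀ᵐ p ∂m, p.2 ≠ a := by simpa [ae_iff] using hm.measure_snd_eq_zero ha
  exact measure_congr (h_ne.mono fun p hp => propext (le_iff_lt_or_eq.trans (or_iff_left hp)))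

end IsTwistSubinvariant

/-! ### The distribution function -/

lemma exp_logTwistDensity_inv (ν : ℝ) {a : ℝ} (ha : 0 < a) {p : ℝ × ℝ} (hp : 0 ≤ p.2) :
    exp (logTwistDensity ν a⁻¹ p) = a ^ (2 * ν) * exp (-2 / a) *
      ((a + p.2) ^ (-(2 * ν)) * exp (2 * exp p.1 / (a + p.2))) := by
  have h_sum : 0 < a + p.2 := by positivity
  have h_factor : 1 + a⁻¹ * p.2 = (a + p.2) / a := by field_simp
  rw [rpow_def_of_pos ha, rpow_def_of_pos h_sum, ← exp_add, ← exp_add, ← exp_add,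
    logTwistDensity, h_factor, log_div h_sum.ne' ha.ne']
  congr 1
  field_simp
  ring

lemma Adrift_nonneg {α : Type*} (X : ℝ → α → ℝ) (ν : ℝ) {t : ℝ} (ht : 0 ≤ t) (a : α) :
    0 ≤ Adrift X ν t a :=
  intervalIntegral.integral_nonneg ht fun _ _ => (exp_pos _).le

section Distribution

variable {P B}

theorem measure_Adrift_le (hB : IsBrownianMotion P B) (ν : ℝ) {t a : ℝ} (ht : 0 < t)
    (ha : 0 < a) :
    P {ω | Adrift B ν t ω ≤ a}
      = ∫⁻ ω, ENNReal.ofReal (exp (logTwistDensity ν a⁻¹ (endpoint B ν t ω))) ∂P := by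
  have := hB.isProbabilityMeasure
  have h_end := measurable_endpoint hB ν ht
  have h_law := (isTwistSubinvariant_map_endpoint hB ν ht).measure_snd_le ha
  have h_domain : endpoint B ν t ⁻¹' twistDomain a⁻¹ = univ := eq_univ_of_forall fun ω =>
    add_pos_of_pos_of_nonneg one_pos (mul_nonneg (inv_nonneg.2 ha.le) (Adrift_nonneg B ν ht.le ω))
  rw [Measure.map_apply h_end (measurableSet_le measurable_snd measurable_const),
    setLIntegral_map (measurableSet_twistDomain _)
      (measurable_logTwistDensity ν a⁻¹).exp.ennreal_ofReal h_end,
    h_domain, setLIntegral_univ] at h_law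
  exact h_law

end Distribution

theorem cdf_Adrift_eq (hB : IsBrownianMotion P B) (ν t a : ℝ) (ht : 0 < t) (ha : 0 < a) :
    (P {ω | Adrift B ν t ω ≤ a}).toReal
      = a ^ (2 * ν) * Real.exp (-2 / a) *
        ∫ ω, (a + Adrift B ν t ω) ^ (-(2 * ν)) *
              Real.exp (2 * Real.exp (B t ω + (ν - 1 / 2) * t) / (a + Adrift B ν t ω)) ∂P := by
  have h_meas : Measurable fun ω => exp (logTwistDensity ν a⁻¹ (endpoint B ν t ω)) :=
    ((measurable_logTwistDensity ν a⁻¹).comp (measurable_endpoint hB ν ht)).exp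
  rw [measure_Adrift_le hB ν ht ha, ← integral_const_mul,
    ← integral_eq_lintegral_of_nonneg_ae (.of_forall fun ω => (exp_pos _).le)
      h_meas.aestronglyMeasurable]
  exact integral_congr_ae (.of_forall fun ω =>
    exp_logTwistDensity_inv ν ha (Adrift_nonneg B ν ht.le ω))
end
end

section
/- For every t > 0 and every a > 0, the cumulative distribution function u ↦ P[ A_t ≤ u ] is differentiable at a with derivative (2/a²)·P[ A_t ≤ a ] − (2/a²)·P[ A_t^{(1)} ≤ a ]; that is, the probability density function g_t of A_t satisfies g_t(a) = (2/a²)·( P[A_t ≤ a] − P[A_t^{(1)} ≤ a] ). -/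
open MeasureTheory ProbabilityTheory Real Set

noncomputable section

variable {Ω : Type*} [MeasurableSpace Ω] (P : MeasureTheory.Measure Ω) (B : ℝ → Ω → ℝ)

/-!
Let `B^v` be `B` with unit drift added up to time `v`. As `v` runs over `[0, t]`, the functional
`A_t(B^v)` increases from `A_t` to `A_t^{(1)}` with derivative `e^v (A_t - A_v)`, so integrating a
test function `φ` over `[A_t, A_t^{(1)})` is integrating `e^v (A_t - A_v) φ(A_t(B^v))` over `v`.
By Girsanov, `E[e^v (A_t - A_v) φ(A_t(B^v))] = E[M_v (A_t - A_v) φ(A_t)]`, and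
`∫_0^t M_v (A_t - A_v) dv = A_t² / 2` because `M = dA/dv`. Fubini therefore gives
`∫ φ(z) P[A_t ≤ z < A_t^{(1)}] dz = E[φ(A_t) A_t² / 2]`, which identifies the density of `A_t`.

Girsanov's theorem is only needed for integral functionals of the path. On a grid containing `v` it
amounts to exponential tilting of independent Gaussian increments, and Riemann-type sums transfer it
to the integrals.
-/

open Filter Function
open scoped ENNReal NNReal Topology

lemma gaussianReal_withDensity_exp (μ c : ℝ) (v : ℝ≥0) :
    (gaussianReal μ v).withDensity
        (fun x => ENNReal.ofReal (exp (c * (x - μ) - c ^ 2 * v / 2))) =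
      gaussianReal (μ + c * v) v := by
  rcases eq_or_ne v 0 with rfl | hv
  · rw [gaussianReal_zero_var, dirac_withDensity]
    simp
  · have hv' : (v : ℝ) ≠ 0 := by exact_mod_cast hv
    rw [gaussianReal_of_var_ne_zero _ hv, gaussianReal_of_var_ne_zero _ hv,
      ← withDensity_mul _ (by fun_prop) (by fun_prop)]
    congr 1
    ext x
    simp only [Pi.mul_apply, gaussianPDF, gaussianPDFReal]
    rw [← ENNReal.ofReal_mul (by positivity), mul_assoc, ← exp_add]
    congr 3
    field_simp
    ring

lemma indicator_pi_prod_eq_prod_indicator {ι R : Type*} {E : ι → Type*} [DecidableEq ι]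
    [CommMonoidWithZero R] (s u : Finset ι) (S : ∀ i, Set (E i)) (w : ∀ i, E i → R)
    (x : ∀ i, E i) :
    ((u : Set ι).pi S).indicator (fun x => ∏ i ∈ s, w i (x i)) x =
      ∏ i ∈ s ∪ u, (if i ∈ u then S i else univ).indicator (if i ∈ s then w i else 1) (x i) := by
  by_cases hx : ∀ i ∈ u, x i ∈ S i
  · have hmem i : x i ∈ (if i ∈ u then S i else univ) := by
      split_ifs with hi; exacts [hx i hi, trivial]
    simp_rw [indicator_of_mem (hmem _)]
    rw [indicator_of_mem (by exact hx),
      ← Finset.prod_subset Finset.subset_union_left fun i _ hi => by simp [hi]]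
    exact Finset.prod_congr rfl fun i hi => by simp [hi]
  · rw [indicator_of_notMem (by exact hx)]
    push Not at hx
    obtain ⟨i, hi, hiS⟩ := hx
    exact (Finset.prod_eq_zero (Finset.mem_union_right s hi) (by simp [hi, hiS])).symm

lemma hasLaw_infinitePi_withDensity_prod {α ι : Type*} {E : ι → Type*} [MeasurableSpace α]
    [∀ i, MeasurableSpace (E i)] {P : Measure α} {Y : ∀ i, α → E i} {μ ν : ∀ i, Measure (E i)}
    [∀ i, IsProbabilityMeasure (ν i)] {w : ∀ i, E i → ℝ≥0∞} (s : Finset ι)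
    (hY : ∀ i, Measurable (Y i)) (hind : iIndepFun Y P) (hlaw : ∀ i, HasLaw (Y i) (μ i) P)
    (hw : ∀ i, Measurable (w i)) (hs : ∀ i ∈ s, (μ i).withDensity (w i) = ν i)
    (hs' : ∀ i ∉ s, μ i = ν i) :
    HasLaw (fun ω i => Y i ω) (Measure.infinitePi ν)
      (P.withDensity fun ω => ∏ i ∈ s, w i (Y i ω)) := by
  classical
  have hYm : Measurable fun ω i => Y i ω := measurable_pi_iff.2 hY
  refine ⟨hYm.aemeasurable, Measure.eq_infinitePi _ fun u S hS => ?_⟩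
  have hbox : MeasurableSet ((u : Set ι).pi S) := .pi u.countable_toSet fun i _ => hS i
  let T i := if i ∈ u then S i else univ
  let g i := if i ∈ s then w i else 1
  have hT i : MeasurableSet (T i) := by unfold T; split_ifs <;> simp [hS i]
  have hg i : Measurable (g i) := by unfold g; split_ifs; exacts [hw i, measurable_one]
  have hν i : (μ i).withDensity (g i) = ν i := by
    unfold g; split_ifs with hi; exacts [hs i hi, by rw [withDensity_one, hs' i hi]]
  have hfactor i : ∫⁻ ω, (T i).indicator (g i) (Y i ω) ∂P = ν i (T i) := by
    rw [(hlaw i).lintegral_comp ((hg i).indicator (hT i)).aemeasurable,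
      lintegral_indicator (hT i), ← withDensity_apply _ (hT i), hν]
  calc (P.withDensity fun ω => ∏ i ∈ s, w i (Y i ω)).map (fun ω i => Y i ω) ((u : Set ι).pi S)
      = ∫⁻ ω, ∏ i ∈ s ∪ u, (T i).indicator (g i) (Y i ω) ∂P := by
        rw [Measure.map_apply hYm hbox, withDensity_apply _ (hYm hbox),
          ← lintegral_indicator (hYm hbox)]
        exact lintegral_congr fun ω => indicator_pi_prod_eq_prod_indicator s u S w (Y · ω)
    _ = ∏ i ∈ s ∪ u, ν i (T i) := by
        rw [lintegral_prod_eq_prod_lintegral_of_indepFun _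
          (fun i ω => (T i).indicator (g i) (Y i ω))
          (hind.comp _ fun i => (hg i).indicator (hT i))
          fun i => ((hg i).indicator (hT i)).comp (hY i)]
        simp_rw [hfactor]
    _ = ∏ i ∈ u, ν i (S i) := by
        rw [← Finset.prod_subset Finset.subset_union_right fun i _ hi => by simp [T, hi]]
        exact Finset.prod_congr rfl fun i hi => by simp [T, hi]

lemma identDistrib_of_tendsto {α β ι E : Type*} [MeasurableSpace α] [MeasurableSpace β]
    [TopologicalSpace E] [TopologicalSpace.PseudoMetrizableSpace E] [MeasurableSpace E]
    [BorelSpace E] {μ : Measure α} {ν : Measure β} [IsProbabilityMeasure μ]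
    [IsProbabilityMeasure ν] {l : Filter ι} [l.NeBot] [l.IsCountablyGenerated]
    {X : ι → α → E} {Y : ι → β → E} {Z : α → E} {W : β → E}
    (hXY : ∀ n, IdentDistrib (X n) (Y n) μ ν)
    (hX : ∀ᵐ ω ∂μ, Tendsto (X · ω) l (𝓝 (Z ω))) (hY : ∀ᵐ ω ∂ν, Tendsto (Y · ω) l (𝓝 (W ω))) :
    IdentDistrib Z W μ ν := by
  have hZ := aemeasurable_of_tendsto_metrizable_ae l (fun n => (hXY n).aemeasurable_fst) hX
  have hW := aemeasurable_of_tendsto_metrizable_ae l (fun n => (hXY n).aemeasurable_snd) hY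
  have hXZ := tendstoInDistribution_of_ae_tendsto (fun n => (hXY n).aemeasurable_fst) hZ hX
  have hYW := tendstoInDistribution_of_ae_tendsto (fun n => (hXY n).aemeasurable_snd) hW hY
  have hXW : TendstoInDistribution X l W (fun _ => μ) ν :=
    ⟨hXZ.forall_aemeasurable, hW, by simpa only [(hXY _).map_eq] using hYW.tendsto⟩
  exact ⟨hZ, hW, tendstoInDistribution_unique X hXZ hXW⟩

lemma tendsto_intervalIntegral_grid {f : ℝ → ℝ → ℝ} (hf : Continuous (uncurry f)) {b : ℝ → ℝ}
    (hb : Continuous b) {r : ℝ} (hr : 0 ≤ r) :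
    Tendsto (fun c : ℝ => ∫ s in 0..r, f s (b (⌊s * c⌋₊ / c))) atTop
      (𝓝 (∫ s in 0..r, f s (b s))) := by
  have hg : Continuous fun p : ℝ × ℝ => f p.1 (b p.2) := by fun_prop
  obtain ⟨K, hK⟩ := (isCompact_Icc.prod isCompact_Icc).exists_bound_of_continuousOn
    (s := Icc 0 r ×ˢ Icc 0 r) hg.continuousOn
  refine intervalIntegral.tendsto_integral_filter_of_dominated_convergence (fun _ => K)
    (.of_forall fun c => ?_) ?_ (by simp) ?_
  · have : Measurable fun s : ℝ => (s, (⌊s * c⌋₊ / c : ℝ)) := by fun_prop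
    exact (hg.measurable.comp this).aestronglyMeasurable
  · filter_upwards [eventually_gt_atTop 0] with c hc
    refine .of_forall fun s hs => hK (s, _) ?_
    rw [uIoc_of_le hr] at hs
    have hfloor : ⌊s * c⌋₊ / c ≤ s :=
      (div_le_iff₀ hc).2 (Nat.floor_le (mul_nonneg hs.1.le hc.le))
    exact ⟨⟨hs.1.le, hs.2⟩, by positivity, hfloor.trans hs.2⟩
  · refine .of_forall fun s hs => ?_
    rw [uIoc_of_le hr] at hs
    have hs' : Tendsto (fun c => (s, (⌊s * c⌋₊ / c : ℝ))) atTop (𝓝 (s, s)) :=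
      tendsto_const_nhds.prodMk_nhds (tendsto_nat_floor_mul_div_atTop hs.1.le)
    exact (hg.tendsto _).comp hs'

lemma measurable_intervalIntegral {α : Type*} [MeasurableSpace α] {F : α → ℝ → ℝ}
    (hF : Measurable (uncurry F)) (x y : ℝ) : Measurable fun a => ∫ s in x..y, F a s := by
  unfold intervalIntegral
  exact hF.stronglyMeasurable.integral_prod_right.measurable.sub
    hF.stronglyMeasurable.integral_prod_right.measurable

lemma measurable_intervalIntegral_step {f : ℝ → ℝ → ℝ} (hf : Measurable (uncurry f)) (c r : ℝ) :
    Measurable fun x : ℕ → ℝ => ∫ s in 0..r, f s (x ⌊s * c⌋₊) := by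
  have heval : Measurable fun p : (ℕ → ℝ) × ℕ => p.1 p.2 :=
    measurable_from_prod_countable_left measurable_pi_apply
  have hstep : Measurable fun p : (ℕ → ℝ) × ℝ => p.1 ⌊p.2 * c⌋₊ :=
    heval.comp (f := fun p : (ℕ → ℝ) × ℝ => (p.1, ⌊p.2 * c⌋₊)) (by fun_prop)
  exact measurable_intervalIntegral (F := fun (x : ℕ → ℝ) s => f s (x ⌊s * c⌋₊))
    (hf.comp (measurable_snd.prodMk hstep)) 0 r

lemma hasDerivAt_cdf_of_eq_withDensity {μ : Measure ℝ} [IsProbabilityMeasure μ] {h : ℝ → ℝ}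
    (hm : Measurable h) (h0 : 0 ≤ h) (hμ : μ = volume.withDensity fun x => ENNReal.ofReal (h x))
    {a : ℝ} (ha : ContinuousAt h a) : HasDerivAt (cdf μ) (h a) a := by
  have hint : Integrable h := by
    refine ⟨hm.aestronglyMeasurable, ?_⟩
    rw [hasFiniteIntegral_iff_ofReal (.of_forall h0), ← setLIntegral_univ,
      ← withDensity_apply _ .univ, ← hμ]
    exact measure_lt_top μ univ
  have hcdf x : cdf μ x = cdf μ a + ∫ z in a..x, h z := by
    have hIic y : cdf μ y = ∫ z in Iic y, h z := by
      rw [cdf_eq_real, measureReal_def, hμ, withDensity_apply _ measurableSet_Iic,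
        integral_eq_lintegral_of_nonneg_ae (.of_forall h0) hm.aestronglyMeasurable]
    rw [hIic, hIic, ← intervalIntegral.integral_Iic_sub_Iic hint.integrableOn hint.integrableOn]
    ring
  rw [funext hcdf]
  exact (intervalIntegral.integral_hasDerivAt_right hint.intervalIntegrable
    hm.stronglyMeasurable.stronglyMeasurableAtFilter ha).const_add _

lemma continuousAt_cdf {μ : Measure ℝ} [IsProbabilityMeasure μ] {a : ℝ} (ha : μ {a} = 0) :
    ContinuousAt (cdf μ) a := by
  rw [(monotone_cdf μ).continuousAt_iff_leftLim_eq_rightLim, StieltjesFunction.rightLim_eq]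
  rw [← measure_cdf μ, StieltjesFunction.measure_singleton, ENNReal.ofReal_eq_zero] at ha
  exact ((monotone_cdf μ).leftLim_le le_rfl).antisymm (by linarith)

lemma cdf_map {α : Type*} [MeasurableSpace α] {P : Measure α} [IsProbabilityMeasure P] {X : α → ℝ}
    (hX : Measurable X) (z : ℝ) : cdf (P.map X) z = P.real {ω | X ω ≤ z} := by
  have := Measure.isProbabilityMeasure_map (μ := P) hX.aemeasurable
  rw [cdf_eq_real, map_measureReal_apply hX measurableSet_Iic]
  rfl

lemma measure_Ico_eq_ofReal_cdf_sub {α : Type*} [MeasurableSpace α] {P : Measure α}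
    [IsProbabilityMeasure P] {X Y : α → ℝ} (hX : Measurable X) (hY : Measurable Y) (hXY : X ≤ Y)
    (z : ℝ) : P {ω | z ∈ Ico (X ω) (Y ω)} =
      ENNReal.ofReal (cdf (P.map X) z - cdf (P.map Y) z) := by
  have hsub : {ω | Y ω ≤ z} ⊆ {ω | X ω ≤ z} := fun ω hω => (hXY ω).trans hω
  have hdiff : {ω | z ∈ Ico (X ω) (Y ω)} = {ω | X ω ≤ z} \ {ω | Y ω ≤ z} := by ext ω; simp
  rw [hdiff, ← ofReal_measureReal, measureReal_sdiff hsub (measurableSet_le hY measurable_const),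
    cdf_map hX, cdf_map hY]

lemma lintegral_mul_measure_section {α β : Type*} [MeasurableSpace α] [MeasurableSpace β]
    {μ : Measure α} {ν : Measure β} [SFinite μ] [SFinite ν] {S : Set (β × α)}
    (hS : MeasurableSet S) {φ : β → ℝ≥0∞} (hφ : Measurable φ) :
    ∫⁻ z, φ z * μ {ω | (z, ω) ∈ S} ∂ν = ∫⁻ ω, (∫⁻ z in {z | (z, ω) ∈ S}, φ z ∂ν) ∂μ := by
  calc ∫⁻ z, φ z * μ {ω | (z, ω) ∈ S} ∂ν
      = ∫⁻ z, ∫⁻ ω, S.indicator (φ ∘ Prod.fst) (z, ω) ∂μ ∂ν :=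
        lintegral_congr fun z => (lintegral_indicator_const (measurable_prodMk_left hS) _).symm
    _ = ∫⁻ ω, ∫⁻ z, S.indicator (φ ∘ Prod.fst) (z, ω) ∂ν ∂μ :=
        lintegral_lintegral_swap ((hφ.comp measurable_fst).indicator hS).aemeasurable
    _ = ∫⁻ ω, (∫⁻ z in {z | (z, ω) ∈ S}, φ z ∂ν) ∂μ :=
        lintegral_congr fun ω => lintegral_indicator (measurable_prodMk_right hS) _

/-- The Cameron–Martin shift of the process `X` by the path `s ↦ min s v`: unit drift is added up
to time `v`. Time is meant to run over `[0, ∞)`. -/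
def addDriftUntil {α : Type*} (X : ℝ → α → ℝ) (v s : ℝ) (ω : α) : ℝ :=
  X s ω + min s v

lemma continuous_addDriftUntil {α : Type*} {X : ℝ → α → ℝ} {ω : α} (hX : Continuous (X · ω))
    (v : ℝ) : Continuous (addDriftUntil X v · ω) :=
  hX.add (by fun_prop)

section Pathwise

variable {α : Type*} {X : ℝ → α → ℝ} {ω : α}

lemma M_pos (t : ℝ) : 0 < M X t ω := exp_pos _

lemma Adrift_zero (t : ℝ) : Adrift X 0 t ω = A X t ω := by
  simp only [Adrift, A]
  congr! 3
  ring

lemma continuous_M (hX : Continuous (X · ω)) : Continuous (M X · ω) := by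
  unfold M
  fun_prop

lemma hasDerivAt_Adrift (hX : Continuous (X · ω)) (ν v : ℝ) :
    HasDerivAt (Adrift X ν · ω) (exp (X v ω + (ν - 1 / 2) * v)) v :=
  ((by fun_prop : Continuous fun s =>
    exp (X s ω + (ν - 1 / 2) * s)).integral_hasStrictDerivAt 0 v).hasDerivAt

lemma hasDerivAt_A (hX : Continuous (X · ω)) (v : ℝ) : HasDerivAt (A X · ω) (M X v ω) v :=
  ((continuous_M hX).integral_hasStrictDerivAt 0 v).hasDerivAt

lemma continuous_A (hX : Continuous (X · ω)) : Continuous (A X · ω) :=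
  continuous_iff_continuousAt.2 fun v => (hasDerivAt_A hX v).continuousAt

lemma monotone_A (hX : Continuous (X · ω)) : Monotone (A X · ω) :=
  monotone_of_deriv_nonneg (fun v => (hasDerivAt_A hX v).differentiableAt) fun v => by
    rw [(hasDerivAt_A hX v).deriv]
    exact (M_pos v).le

lemma A_pos (hX : Continuous (X · ω)) {t : ℝ} (ht : 0 < t) : 0 < A X t ω :=
  intervalIntegral.intervalIntegral_pos_of_pos ((continuous_M hX).intervalIntegrable _ _)
    (fun v => M_pos v) ht

lemma A_addDriftUntil_zero {t : ℝ} (ht : 0 ≤ t) : A (addDriftUntil X 0) t ω = A X t ω := by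
  refine intervalIntegral.integral_congr fun s hs => ?_
  rw [uIcc_of_le ht] at hs
  simp [addDriftUntil, hs.1]

lemma A_addDriftUntil_self {v : ℝ} (hv : 0 ≤ v) :
    A (addDriftUntil X v) v ω = Adrift X 1 v ω := by
  refine intervalIntegral.integral_congr fun s hs => ?_
  rw [uIcc_of_le hv] at hs
  simp only [addDriftUntil, min_eq_left hs.2]
  ring_nf

lemma A_addDriftUntil (hX : Continuous (X · ω)) {v t : ℝ} (hv : 0 ≤ v) (hvt : v ≤ t) :
    A (addDriftUntil X v) t ω = Adrift X 1 v ω + exp v * (A X t ω - A X v ω) := by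
  have hint x y : IntervalIntegrable (M X · ω) volume x y :=
    (continuous_M hX).intervalIntegrable x y
  have hint' x y : IntervalIntegrable (M (addDriftUntil X v) · ω) volume x y :=
    (continuous_M (continuous_addDriftUntil hX v)).intervalIntegrable x y
  have htail : ∫ s in v..t, M (addDriftUntil X v) s ω = ∫ s in v..t, exp v * M X s ω := by
    refine intervalIntegral.integral_congr fun s hs => ?_
    rw [uIcc_of_le hvt] at hs
    simp only [addDriftUntil, M, min_eq_right hs.1, ← exp_add]
    ring_nf
  calc A (addDriftUntil X v) t ω
      = A (addDriftUntil X v) v ω + ∫ s in v..t, M (addDriftUntil X v) s ω :=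
        (intervalIntegral.integral_add_adjacent_intervals (hint' 0 v) (hint' v t)).symm
    _ = Adrift X 1 v ω + exp v * ∫ s in v..t, M X s ω := by
        rw [A_addDriftUntil_self hv, htail, intervalIntegral.integral_const_mul]
    _ = Adrift X 1 v ω + exp v * (A X t ω - A X v ω) := by
        rw [← intervalIntegral.integral_interval_sub_left (hint 0 t) (hint 0 v)]
        rfl

lemma hasDerivWithinAt_A_addDriftUntil (hX : Continuous (X · ω)) {v t : ℝ} (hv : v ∈ Icc 0 t) :
    HasDerivWithinAt (fun v => A (addDriftUntil X v) t ω) (exp v * (A X t ω - A X v ω))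
      (Icc 0 t) v := by
  have hderiv := ((hasDerivAt_Adrift hX 1 v).add
    ((Real.hasDerivAt_exp v).mul ((hasDerivAt_A hX v).const_sub (A X t ω)))).hasDerivWithinAt
    (s := Icc 0 t)
  have hM : exp (X v ω + (1 - 1 / 2) * v) = exp v * M X v ω := by
    rw [M, ← exp_add]
    ring_nf
  refine (hderiv.congr_deriv (by rw [hM]; ring)).congr (fun u hu => ?_) ?_
  · exact A_addDriftUntil hX hu.1 hu.2
  · exact A_addDriftUntil hX hv.1 hv.2

lemma monotoneOn_A_addDriftUntil (hX : Continuous (X · ω)) (t : ℝ) :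
    MonotoneOn (fun v => A (addDriftUntil X v) t ω) (Icc 0 t) := by
  intro u hu v _ huv
  have hint w : IntervalIntegrable (M (addDriftUntil X w) · ω) volume 0 t :=
    (continuous_M (continuous_addDriftUntil hX w)).intervalIntegrable 0 t
  refine intervalIntegral.integral_mono_on (hu.1.trans hu.2) (hint u) (hint v) fun s _ => ?_
  unfold addDriftUntil
  gcongr

lemma A_le_Adrift_one (hX : Continuous (X · ω)) {t : ℝ} (ht : 0 ≤ t) :
    A X t ω ≤ Adrift X 1 t ω := by
  rw [← A_addDriftUntil_zero ht, ← A_addDriftUntil_self ht]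
  exact monotoneOn_A_addDriftUntil hX t (left_mem_Icc.2 ht) (right_mem_Icc.2 ht) ht

lemma setLIntegral_Ico_A_Adrift_one (hX : Continuous (X · ω)) {t : ℝ} (ht : 0 ≤ t)
    (φ : ℝ → ℝ≥0∞) :
    ∫⁻ z in Ico (A X t ω) (Adrift X 1 t ω), φ z =
      ∫⁻ v in Ioc 0 t,
        ENNReal.ofReal (exp v * (A X t ω - A X v ω)) * φ (A (addDriftUntil X v) t ω) := by
  have hmono := monotoneOn_A_addDriftUntil hX t
  have himage : (fun v => A (addDriftUntil X v) t ω) '' Icc 0 t =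
      Icc (A X t ω) (Adrift X 1 t ω) := by
    have hcont : ContinuousOn (fun v => A (addDriftUntil X v) t ω) (Icc 0 t) := fun v hv =>
      (hasDerivWithinAt_A_addDriftUntil hX hv).continuousWithinAt
    rw [hcont.image_Icc_of_monotoneOn ht hmono, A_addDriftUntil_zero ht, A_addDriftUntil_self ht]
  rw [setLIntegral_congr Ico_ae_eq_Icc, setLIntegral_congr Ioc_ae_eq_Icc, ← himage]
  exact lintegral_image_eq_lintegral_deriv_mul_of_monotoneOn measurableSet_Icc
    (fun v hv => hasDerivWithinAt_A_addDriftUntil hX hv) hmono φ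

lemma setLIntegral_M_mul_A_sub (hX : Continuous (X · ω)) {t : ℝ} (ht : 0 ≤ t) :
    ∫⁻ v in Ioc 0 t, ENNReal.ofReal (M X v ω) * ENNReal.ofReal (A X t ω - A X v ω) =
      ENNReal.ofReal (A X t ω ^ 2 / 2) := by
  have hderiv v : HasDerivAt (fun v => -(A X t ω - A X v ω) ^ 2 / 2)
      (M X v ω * (A X t ω - A X v ω)) v :=
    ((((hasDerivAt_A hX v).const_sub (A X t ω)).pow 2).neg.div_const 2).congr_deriv
      (by push_cast; ring)
  have hnonneg v (hv : v ∈ Ioc 0 t) : 0 ≤ M X v ω * (A X t ω - A X v ω) :=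
    mul_nonneg (M_pos v).le (sub_nonneg.2 (monotone_A hX hv.2))
  have hint : IntervalIntegrable (fun v => M X v ω * (A X t ω - A X v ω)) volume 0 t :=
    ((continuous_M hX).mul (continuous_const.sub (continuous_A hX))).intervalIntegrable 0 t
  calc _ = ∫⁻ v in Ioc 0 t, ENNReal.ofReal (M X v ω * (A X t ω - A X v ω)) := by
        simp_rw [ENNReal.ofReal_mul (M_pos _).le]
    _ = ENNReal.ofReal (∫ v in 0..t, M X v ω * (A X t ω - A X v ω)) := by
        rw [intervalIntegral.integral_of_le ht, ofReal_integral_eq_lintegral_ofReal hint.1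
          (ae_restrict_of_forall_mem measurableSet_Ioc hnonneg)]
    _ = ENNReal.ofReal (A X t ω ^ 2 / 2) := by
        rw [intervalIntegral.integral_eq_sub_of_hasDerivAt (fun v _ => hderiv v) hint]
        have hA0 : A X 0 ω = 0 := intervalIntegral.integral_same
        rw [hA0]
        ring_nf

end Pathwise

section Measurability

variable {α : Type*} [MeasurableSpace α] {X : ℝ → α → ℝ}

lemma measurable_Adrift (hm : ∀ s, Measurable (X s)) (hc : ∀ ω, Continuous (X · ω)) (ν t : ℝ) :
    Measurable (Adrift X ν t) := by
  have hX : Measurable fun p : α × ℝ => X p.2 p.1 :=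
    (measurable_uncurry_of_continuous_of_measurable hc hm).comp measurable_swap
  exact measurable_intervalIntegral (hX.add (by fun_prop)).exp 0 t

lemma measurable_A (hm : ∀ s, Measurable (X s)) (hc : ∀ ω, Continuous (X · ω)) (t : ℝ) :
    Measurable (A X t) := by
  have hA : Adrift X 0 t = A X t := funext fun _ => Adrift_zero t
  exact hA ▸ measurable_Adrift hm hc 0 t

lemma measurable_M (hm : ∀ s, Measurable (X s)) (t : ℝ) : Measurable (M X t) := by
  unfold M
  fun_prop

lemma measurable_uncurry_A (hm : ∀ s, Measurable (X s)) (hc : ∀ ω, Continuous (X · ω)) :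
    Measurable (uncurry (A X)) :=
  measurable_uncurry_of_continuous_of_measurable (fun ω => continuous_A (hc ω)) (measurable_A hm hc)

lemma measurable_uncurry_M (hm : ∀ s, Measurable (X s)) (hc : ∀ ω, Continuous (X · ω)) :
    Measurable (uncurry (M X)) :=
  measurable_uncurry_of_continuous_of_measurable (fun ω => continuous_M (hc ω)) (measurable_M hm)

lemma measurable_A_addDriftUntil (hm : ∀ s, Measurable (X s)) (hc : ∀ ω, Continuous (X · ω))
    (t : ℝ) : Measurable fun p : ℝ × α => A (addDriftUntil X p.1) t p.2 :=
  measurable_A (X := fun s (p : ℝ × α) => addDriftUntil X p.1 s p.2)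
    (fun s => by have := hm s; unfold addDriftUntil; fun_prop)
    (fun p => continuous_addDriftUntil (hc p.2) p.1) t

end Measurability

section Girsanov

variable {P B}

namespace IsBrownianMotion

lemma hasLaw_increment (hB : IsBrownianMotion P B) {s t : ℝ} (hs : 0 ≤ s) (hst : s ≤ t) :
    HasLaw (fun ω => B t ω - B s ω) (gaussianReal 0 (t - s).toNNReal) P :=
  ⟨((hB.measurable t).sub (hB.measurable s)).aemeasurable, hB.gaussian_increments s t hs hst⟩

lemma hasLaw_increments_addDriftUntil (hB : IsBrownianMotion P B) {τ : ℕ → ℝ} (hτ : Monotone τ)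
    (h0 : 0 ≤ τ 0) (v : ℝ) :
    HasLaw (fun ω i => addDriftUntil B v (τ (i + 1)) ω - addDriftUntil B v (τ i) ω)
      (Measure.infinitePi fun i =>
        gaussianReal (min (τ (i + 1)) v - min (τ i) v) (τ (i + 1) - τ i).toNNReal) P := by
  have hincr i ω : addDriftUntil B v (τ (i + 1)) ω - addDriftUntil B v (τ i) ω =
      B (τ (i + 1)) ω - B (τ i) ω + (min (τ (i + 1)) v - min (τ i) v) := by
    simp only [addDriftUntil]
    ring
  have hm i : Measurable fun ω => B (τ (i + 1)) ω - B (τ i) ω :=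
    (hB.measurable _).sub (hB.measurable _)
  simp_rw [hincr]
  refine iIndepFun.hasLaw_infinitePi (fun i => ?_)
    ((hB.indep_increments τ hτ h0).comp (fun i y => y + (min (τ (i + 1)) v - min (τ i) v))
      fun i => by fun_prop)
    (measurable_pi_iff.2 fun i => (hm i).add_const _).aemeasurable
  simpa using gaussianReal_add_const
    (hB.hasLaw_increment (h0.trans (hτ i.zero_le)) (hτ i.le_succ)) _

lemma M_eq_prod (hB : IsBrownianMotion P B) {τ : ℕ → ℝ} (h0 : τ 0 = 0) (n : ℕ) (ω : Ω) :
    M B (τ n) ω =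
      ∏ i ∈ Finset.range n, exp (B (τ (i + 1)) ω - B (τ i) ω - (τ (i + 1) - τ i) / 2) := by
  rw [← exp_sum, Finset.sum_sub_distrib, ← Finset.sum_div,
    Finset.sum_range_sub (fun i => B (τ i) ω), Finset.sum_range_sub τ, h0, hB.start, M]
  simp

lemma hasLaw_increments_withDensity_M (hB : IsBrownianMotion P B) {τ : ℕ → ℝ} (hτ : Monotone τ)
    (h0 : τ 0 = 0) (n : ℕ) :
    HasLaw (fun ω i => B (τ (i + 1)) ω - B (τ i) ω)
      (Measure.infinitePi fun i =>
        gaussianReal (min (τ (i + 1)) (τ n) - min (τ i) (τ n)) (τ (i + 1) - τ i).toNNReal)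
      (P.withDensity fun ω => ENNReal.ofReal (M B (τ n) ω)) := by
  have hτ0 i : 0 ≤ τ i := h0 ▸ hτ i.zero_le
  simp_rw [hB.M_eq_prod h0, ENNReal.ofReal_prod_of_nonneg fun _ _ => (exp_pos _).le]
  refine hasLaw_infinitePi_withDensity_prod (Finset.range n)
    (w := fun i y => ENNReal.ofReal (exp (y - (τ (i + 1) - τ i) / 2)))
    (fun i => (hB.measurable _).sub (hB.measurable _)) (hB.indep_increments τ hτ h0.ge)
    (fun i => hB.hasLaw_increment (hτ0 i) (hτ i.le_succ)) (fun i => by fun_prop)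
    (fun i hi => ?_) fun i hi => ?_
  · have hi' : i + 1 ≤ n := Finset.mem_range.1 hi
    have htilt := gaussianReal_withDensity_exp 0 1 (τ (i + 1) - τ i).toNNReal
    rw [Real.coe_toNNReal _ (sub_nonneg.2 (hτ i.le_succ))] at htilt
    simpa [min_eq_left (hτ hi'), min_eq_left (hτ (i.le_succ.trans hi'))] using htilt
  · have hi' : n ≤ i := by simpa using hi
    simp [min_eq_right (hτ hi'), min_eq_right (hτ (hi'.trans i.le_succ))]

lemma identDistrib_addDriftUntil (hB : IsBrownianMotion P B) {τ : ℕ → ℝ} (hτ : Monotone τ)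
    (h0 : τ 0 = 0) (n : ℕ) :
    IdentDistrib (fun ω k => B (τ k) ω) (fun ω k => addDriftUntil B (τ n) (τ k) ω)
      (P.withDensity fun ω => ENNReal.ofReal (M B (τ n) ω)) P := by
  have hsum : Measurable fun (x : ℕ → ℝ) k => ∑ i ∈ Finset.range k, x i := by fun_prop
  have hincr := ((hB.hasLaw_increments_withDensity_M hτ h0 n).identDistrib
    (hB.hasLaw_increments_addDriftUntil hτ h0.ge (τ n))).comp hsum
  have hn : 0 ≤ τ n := h0 ▸ hτ n.zero_le
  convert hincr using 3 with ω k ω k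
  · simp [Finset.sum_range_sub (fun i => B (τ i) ω), h0, hB.start]
  · simp only [comp_apply, Finset.sum_range_sub (fun i => addDriftUntil B (τ n) (τ i) ω)]
    simp [addDriftUntil, h0, hB.start, hn]

lemma isProbabilityMeasure_withDensity_M (hB : IsBrownianMotion P B) {v : ℝ} (hv : 0 ≤ v) :
    IsProbabilityMeasure (P.withDensity fun ω => ENNReal.ofReal (M B v ω)) := by
  have hτ : Monotone fun k : ℕ => k * v := fun i j hij => by dsimp only; gcongr
  simpa using (hB.hasLaw_increments_withDensity_M hτ (by simp) 1).isProbabilityMeasure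

lemma identDistrib_integral_addDriftUntil (hB : IsBrownianMotion P B) {f : ℝ → ℝ → ℝ}
    (hf : Continuous (uncurry f)) {v r r' : ℝ} (hv : 0 < v) (hr : 0 ≤ r) (hr' : 0 ≤ r') :
    IdentDistrib (fun ω => (∫ s in 0..r, f s (B s ω), ∫ s in 0..r', f s (B s ω)))
      (fun ω => (∫ s in 0..r, f s (addDriftUntil B v s ω),
        ∫ s in 0..r', f s (addDriftUntil B v s ω)))
      (P.withDensity fun ω => ENNReal.ofReal (M B v ω)) P := by
  have := hB.isProbabilityMeasure
  have := hB.isProbabilityMeasure_withDensity_M hv.le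
  -- A mesh `1 / c m` dividing `v`, so that `v` is itself a grid point.
  let c : ℕ → ℝ := fun m => (m + 1) / v
  have hc : Tendsto c atTop atTop :=
    (tendsto_atTop_add_const_right _ _ tendsto_natCast_atTop_atTop).atTop_div_const hv
  let Φ (m : ℕ) (x : ℕ → ℝ) : ℝ × ℝ :=
    (∫ s in 0..r, f s (x ⌊s * c m⌋₊), ∫ s in 0..r', f s (x ⌊s * c m⌋₊))
  have hΦ m : Measurable (Φ m) := (measurable_intervalIntegral_step hf.measurable _ r).prodMk
    (measurable_intervalIntegral_step hf.measurable _ r')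
  have hlim {b : ℝ → ℝ} (hb : Continuous b) : Tendsto (fun m => Φ m fun k => b (k / c m)) atTop
      (𝓝 (∫ s in 0..r, f s (b s), ∫ s in 0..r', f s (b s))) :=
    ((tendsto_intervalIntegral_grid hf hb hr).comp hc).prodMk_nhds
      ((tendsto_intervalIntegral_grid hf hb hr').comp hc)
  refine identDistrib_of_tendsto (l := atTop) (fun m => ?_)
    (.of_forall fun ω => hlim (hB.continuous_paths ω))
    (.of_forall fun ω => hlim (continuous_addDriftUntil (hB.continuous_paths ω) v))
  have hcm : 0 < c m := by positivity
  have hgrid := hB.identDistrib_addDriftUntil (τ := fun k => k / c m)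
    (fun i j hij => div_le_div_of_nonneg_right (Nat.cast_le.2 hij) hcm.le) (by simp) (m + 1)
  have hlast : ((m + 1 : ℕ) : ℝ) / c m = v := by
    simp only [c]
    push_cast
    field_simp
  simp only [hlast] at hgrid
  exact hgrid.comp (hΦ m)

lemma identDistrib_A_addDriftUntil (hB : IsBrownianMotion P B) {v r r' : ℝ} (hv : 0 < v)
    (hr : 0 ≤ r) (hr' : 0 ≤ r') :
    IdentDistrib (fun ω => (A B r ω, A B r' ω))
      (fun ω => (A (addDriftUntil B v) r ω, A (addDriftUntil B v) r' ω))
      (P.withDensity fun ω => ENNReal.ofReal (M B v ω)) P :=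
  hB.identDistrib_integral_addDriftUntil (f := fun s x => exp (x - s / 2)) (by fun_prop) hv hr hr'

lemma lintegral_A_addDriftUntil (hB : IsBrownianMotion P B) {g : ℝ × ℝ → ℝ≥0∞} (hg : Measurable g)
    {v r r' : ℝ} (hv : 0 < v) (hr : 0 ≤ r) (hr' : 0 ≤ r') :
    ∫⁻ ω, g (A (addDriftUntil B v) r ω, A (addDriftUntil B v) r' ω) ∂P =
      ∫⁻ ω, ENNReal.ofReal (M B v ω) * g (A B r ω, A B r' ω) ∂P := by
  have hA := measurable_A hB.measurable hB.continuous_paths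
  have hgirsanov := ((hB.identDistrib_A_addDriftUntil hv hr hr').comp hg).lintegral_eq
  rw [lintegral_withDensity_eq_lintegral_mul _ (measurable_M hB.measurable v).ennreal_ofReal
    (hg.comp ((hA r).prodMk (hA r')))] at hgirsanov
  exact hgirsanov.symm

lemma map_Adrift_one_absolutelyContinuous (hB : IsBrownianMotion P B) {t : ℝ} (ht : 0 < t) :
    P.map (Adrift B 1 t) ≪ P.map (A B t) := by
  have hA := (hB.identDistrib_A_addDriftUntil ht ht.le ht.le).comp measurable_fst
  have hdrift : Prod.fst ∘ (fun ω => (A (addDriftUntil B t) t ω, A (addDriftUntil B t) t ω)) =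
      Adrift B 1 t := funext fun ω => A_addDriftUntil_self ht.le
  rw [← hdrift, ← hA.map_eq]
  exact (withDensity_absolutelyContinuous P _).map
    (measurable_A hB.measurable hB.continuous_paths t)

end IsBrownianMotion

end Girsanov

section Density

variable {P B}

namespace IsBrownianMotion

lemma lintegral_exp_mul_A_addDriftUntil (hB : IsBrownianMotion P B) {φ : ℝ → ℝ≥0∞}
    (hφ : Measurable φ) {v t : ℝ} (hv : 0 < v) (hvt : v ≤ t) :
    ∫⁻ ω, ENNReal.ofReal (exp v * (A B t ω - A B v ω)) * φ (A (addDriftUntil B v) t ω) ∂P =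
      ∫⁻ ω, ENNReal.ofReal (M B v ω) *
        (ENNReal.ofReal (A B t ω - A B v ω) * φ (A B t ω)) ∂P := by
  rw [← hB.lintegral_A_addDriftUntil (g := fun x => ENNReal.ofReal (x.2 - x.1) * φ x.2)
    (by fun_prop) hv hv.le (hv.le.trans hvt)]
  refine lintegral_congr fun ω => ?_
  simp only [A_addDriftUntil (hB.continuous_paths ω) hv.le hvt,
    A_addDriftUntil_self hv.le, add_sub_cancel_left]

lemma lintegral_mul_measure_Ico_A_Adrift_one (hB : IsBrownianMotion P B) {t : ℝ} (ht : 0 ≤ t)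
    {φ : ℝ → ℝ≥0∞} (hφ : Measurable φ) :
    ∫⁻ z, φ z * P {ω | z ∈ Ico (A B t ω) (Adrift B 1 t ω)} =
      ∫⁻ ω, φ (A B t ω) * ENNReal.ofReal (A B t ω ^ 2 / 2) ∂P := by
  have := hB.isProbabilityMeasure
  have hA := measurable_A hB.measurable hB.continuous_paths t
  have hD := measurable_Adrift hB.measurable hB.continuous_paths 1 t
  have hAu := measurable_uncurry_A hB.measurable hB.continuous_paths
  have hMu := measurable_uncurry_M hB.measurable hB.continuous_paths
  have hshift := measurable_A_addDriftUntil hB.measurable hB.continuous_paths t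
  have hS : MeasurableSet {p : ℝ × Ω | p.1 ∈ Ico (A B t p.2) (Adrift B 1 t p.2)} :=
    (measurableSet_le (hA.comp measurable_snd) measurable_fst).inter
      (measurableSet_lt measurable_fst (hD.comp measurable_snd))
  have hsub : Measurable fun p : ℝ × Ω => A B t p.2 - A B p.1 p.2 :=
    (hA.comp measurable_snd).sub hAu
  calc ∫⁻ z, φ z * P {ω | z ∈ Ico (A B t ω) (Adrift B 1 t ω)}
      = ∫⁻ ω, (∫⁻ z in Ico (A B t ω) (Adrift B 1 t ω), φ z) ∂P :=
        lintegral_mul_measure_section hS hφ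
    _ = ∫⁻ ω, (∫⁻ v in Ioc 0 t, ENNReal.ofReal (exp v * (A B t ω - A B v ω)) *
          φ (A (addDriftUntil B v) t ω)) ∂P :=
        lintegral_congr fun ω => setLIntegral_Ico_A_Adrift_one (hB.continuous_paths ω) ht φ
    _ = ∫⁻ v in Ioc 0 t, ∫⁻ ω, ENNReal.ofReal (exp v * (A B t ω - A B v ω)) *
          φ (A (addDriftUntil B v) t ω) ∂P :=
        (lintegral_lintegral_swap (((measurable_exp.comp measurable_fst).mul
          hsub).ennreal_ofReal.mul (hφ.comp hshift)).aemeasurable).symm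
    _ = ∫⁻ v in Ioc 0 t, ∫⁻ ω, ENNReal.ofReal (M B v ω) *
          (ENNReal.ofReal (A B t ω - A B v ω) * φ (A B t ω)) ∂P :=
        setLIntegral_congr_fun measurableSet_Ioc fun v hv =>
          hB.lintegral_exp_mul_A_addDriftUntil hφ hv.1 hv.2
    _ = ∫⁻ ω, (∫⁻ v in Ioc 0 t, ENNReal.ofReal (M B v ω) *
          (ENNReal.ofReal (A B t ω - A B v ω) * φ (A B t ω))) ∂P :=
        lintegral_lintegral_swap (hMu.ennreal_ofReal.mul (hsub.ennreal_ofReal.mul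
          (hφ.comp (hA.comp measurable_snd)))).aemeasurable
    _ = ∫⁻ ω, φ (A B t ω) * ENNReal.ofReal (A B t ω ^ 2 / 2) ∂P := by
        refine lintegral_congr fun ω => ?_
        have hAc := (continuous_A (hB.continuous_paths ω)).measurable
        have hMc := (continuous_M (hB.continuous_paths ω)).measurable
        rw [← setLIntegral_M_mul_A_sub (hB.continuous_paths ω) ht, mul_comm,
          ← lintegral_mul_const _ (by fun_prop)]
        simp_rw [mul_assoc]

lemma map_A_eq_withDensity (hB : IsBrownianMotion P B) {t : ℝ} (ht : 0 < t) :
    P.map (A B t) = volume.withDensity fun z =>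
      ENNReal.ofReal (2 / z ^ 2 * (cdf (P.map (A B t)) z - cdf (P.map (Adrift B 1 t)) z)) := by
  have := hB.isProbabilityMeasure
  have hA := measurable_A hB.measurable hB.continuous_paths t
  have hD := measurable_Adrift hB.measurable hB.continuous_paths 1 t
  have hle : A B t ≤ Adrift B 1 t := fun ω => A_le_Adrift_one (hB.continuous_paths ω) ht.le
  have hcancel x (hx : 0 < x) : ENNReal.ofReal (2 / x ^ 2) * ENNReal.ofReal (x ^ 2 / 2) = 1 := by
    rw [← ENNReal.ofReal_mul (by positivity), ← ENNReal.ofReal_one]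
    congr 1
    field_simp
  ext S hS
  calc P.map (A B t) S
      = ∫⁻ ω, S.indicator (fun z => ENNReal.ofReal (2 / z ^ 2)) (A B t ω) *
          ENNReal.ofReal (A B t ω ^ 2 / 2) ∂P := by
        rw [Measure.map_apply hA hS, ← lintegral_indicator_one (hA hS)]
        refine lintegral_congr fun ω => ?_
        have hpos := A_pos (hB.continuous_paths ω) ht
        by_cases hω : A B t ω ∈ S <;> simp [hω, hcancel _ hpos]
    _ = ∫⁻ z, S.indicator (fun z => ENNReal.ofReal (2 / z ^ 2)) z *
          P {ω | z ∈ Ico (A B t ω) (Adrift B 1 t ω)} :=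
        (hB.lintegral_mul_measure_Ico_A_Adrift_one ht.le
          (Measurable.indicator (by fun_prop) hS)).symm
    _ = _ := by
        rw [withDensity_apply _ hS, ← lintegral_indicator hS]
        refine lintegral_congr fun z => ?_
        rw [measure_Ico_eq_ofReal_cdf_sub hA hD hle]
        by_cases hz : z ∈ S <;> simp [hz, ENNReal.ofReal_mul (by positivity : 0 ≤ 2 / z ^ 2)]

lemma continuousAt_cdf_map_A (hB : IsBrownianMotion P B) {t : ℝ} (ht : 0 < t) (a : ℝ) :
    ContinuousAt (cdf (P.map (A B t))) a := by
  have := hB.isProbabilityMeasure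
  have := Measure.isProbabilityMeasure_map (μ := P)
    (measurable_A hB.measurable hB.continuous_paths t).aemeasurable
  refine continuousAt_cdf ?_
  rw [hB.map_A_eq_withDensity ht]
  exact withDensity_absolutelyContinuous _ _ (measure_singleton a)

lemma continuousAt_cdf_map_Adrift_one (hB : IsBrownianMotion P B) {t : ℝ} (ht : 0 < t) (a : ℝ) :
    ContinuousAt (cdf (P.map (Adrift B 1 t))) a := by
  have := hB.isProbabilityMeasure
  have := Measure.isProbabilityMeasure_map (μ := P)
    (measurable_Adrift hB.measurable hB.continuous_paths 1 t).aemeasurable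
  refine continuousAt_cdf (hB.map_Adrift_one_absolutelyContinuous ht ?_)
  rw [hB.map_A_eq_withDensity ht]
  exact withDensity_absolutelyContinuous _ _ (measure_singleton a)

end IsBrownianMotion

end Density

theorem density_A (hB : IsBrownianMotion P B) (t a : ℝ) (ht : 0 < t) (ha : 0 < a) :
    HasDerivAt (fun u => (P {ω | A B t ω ≤ u}).toReal)
      (2 / a ^ 2 * (P {ω | A B t ω ≤ a}).toReal
        - 2 / a ^ 2 * (P {ω | Adrift B 1 t ω ≤ a}).toReal) a := by
  have := hB.isProbabilityMeasure
  have hA := measurable_A hB.measurable hB.continuous_paths t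
  have hD := measurable_Adrift hB.measurable hB.continuous_paths 1 t
  have := Measure.isProbabilityMeasure_map (μ := P) hA.aemeasurable
  have hle z : cdf (P.map (Adrift B 1 t)) z ≤ cdf (P.map (A B t)) z := by
    rw [cdf_map hA, cdf_map hD]
    exact measureReal_mono fun ω hω => (A_le_Adrift_one (hB.continuous_paths ω) ht.le).trans hω
  simp_rw [← measureReal_def, ← cdf_map hA, ← cdf_map hD, ← mul_sub]
  exact hasDerivAt_cdf_of_eq_withDensity
    (Measurable.mul (by fun_prop) ((monotone_cdf _).measurable.sub (monotone_cdf _).measurable))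
    (fun z => mul_nonneg (by positivity) (sub_nonneg.2 (hle z)))
    (hB.map_A_eq_withDensity ht)
    (.mul (.div (by fun_prop) (by fun_prop) (by positivity))
      ((hB.continuousAt_cdf_map_A ht a).sub (hB.continuousAt_cdf_map_Adrift_one ht a)))
end
end
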